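/- arXiv:2412.14267 — 7 statements merged into one kernel-verified Lean document; each statement's English description precedes it below -/
import Mathlib

section
/- As x → ∞, uniformly on D, b(g(x,y)) = a∞·x^β + o(x^{(3β−1)/2}) and b′(g(x,y)) = a∞·β·x^{β−1} + o(x^{(3β−3)/2}). -/
open Filter Topology

/-- `F(x,y) = o(x^a)` as `x → ∞`, uniformly over `{y : ‖y‖ ≤ b x}` (the slice of the
domain `D`). -/
def UnifLittleO {d : ℕ} (b : ℝ → ℝ) (F : ℝ → EuclideanSpace ℝ (Fin d) → ℝ) (a : ℝ) :
    Prop :=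
  ∀ ε : ℝ, 0 < ε → ∃ X : ℝ, ∀ x ≥ X, ∀ y : EuclideanSpace ℝ (Fin d), ‖y‖ ≤ b x →
    |F x y| ≤ ε * x ^ a

/-!
The point `g(x,y) = x + k |y|² / b(x)` differs from `x` by `O(b(x)) = O(x^β)` uniformly on the
domain, and `β < 1`, so `g ~ x`. Hence error terms of power order keep their order when evaluated
at `g`, while a power moves by `g^p - x^p = O(x^(p-1) · x^β)`. For `b` (`p = β`) this is of order
`x^(2β-1)`, for `b'` (`p = β - 1`) of order `x^(2β-2)`, and both are absorbed by the stated errors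
because `β < 1`.
-/

open Asymptotics

section PowerAsymptotics

theorem isLittleO_rpow_atTop_iff_tendsto_div {f : ℝ → ℝ} {q : ℝ} :
    (f =o[atTop] fun x ↦ x ^ q) ↔ Tendsto (fun x ↦ f x / x ^ q) atTop (𝓝 0) :=
  isLittleO_iff_tendsto' <| (eventually_gt_atTop 0).mono fun _ hx h ↦
    absurd h (Real.rpow_pos_of_pos hx q).ne'

theorem isLittleO_rpow_rpow_atTop {p q : ℝ} (hpq : p < q) :
    (fun x : ℝ ↦ x ^ p) =o[atTop] fun x ↦ x ^ q := by
  refine isLittleO_rpow_atTop_iff_tendsto_div.2 <|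
    (tendsto_rpow_neg_atTop (sub_pos.2 hpq)).congr' ?_
  filter_upwards [eventually_gt_atTop 0] with x hx
  rw [neg_sub, Real.rpow_sub hx]

variable {α : Type*} {l : Filter α} {u v : α → ℝ}

theorem isEquivalent_of_sub_isBigO_rpow {r : ℝ} (hr : r < 1) (hu : Tendsto u l atTop)
    (hvu : (fun i ↦ v i - u i) =O[l] fun i ↦ u i ^ r) : v ~[l] u := by
  have hpow : (fun x : ℝ ↦ x ^ r) =o[atTop] fun x ↦ x := by
    simpa only [Real.rpow_one] using isLittleO_rpow_rpow_atTop hr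
  exact hvu.trans_isLittleO (hpow.comp_tendsto hu)

-- With `t = v / u → 1`, this is `t ^ p - 1 = O(t - 1)` multiplied by `u ^ p`.
theorem isBigO_rpow_sub_rpow (hvu : v ~[l] u) (hu : ∀ᶠ i in l, 0 < u i) (p : ℝ) :
    (fun i ↦ v i ^ p - u i ^ p) =O[l] fun i ↦ u i ^ (p - 1) * (v i - u i) := by
  have hratio : Tendsto (v / u) l (𝓝 1) :=
    (isEquivalent_iff_tendsto_one (hu.mono fun _ ↦ ne_of_gt)).1 hvu
  have hpow : (fun t : ℝ ↦ t ^ p - 1) =O[𝓝 1] fun t ↦ t - 1 := by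
    simpa only [Real.one_rpow] using
      (Real.hasDerivAt_rpow_const (p := p) (.inl one_ne_zero)).differentiableAt.isBigO_sub
  refine ((isBigO_refl (fun i ↦ u i ^ p) l).mul (hpow.comp_tendsto hratio)).congr' ?_ ?_
  · filter_upwards [hu, hvu.eventually_pos hu] with i hui hvi
    have hpow_ne := (Real.rpow_pos_of_pos hui p).ne'
    simp only [Function.comp_apply, Pi.div_apply, Real.div_rpow hvi.le hui.le]
    field_simp
  · filter_upwards [hu] with i hui
    simp only [Function.comp_apply, Pi.div_apply, Real.rpow_sub_one hui.ne']
    field_simp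

theorem isLittleO_comp_sub_const_mul_rpow {h : ℝ → ℝ} {c p q r : ℝ} (hr : r < 1)
    (hpq : p - 1 + r < q) (hu : Tendsto u l atTop)
    (hvu : (fun i ↦ v i - u i) =O[l] fun i ↦ u i ^ r)
    (hh : (fun x ↦ h x - c * x ^ p) =o[atTop] fun x ↦ x ^ q) :
    (fun i ↦ h (v i) - c * u i ^ p) =o[l] fun i ↦ u i ^ q := by
  have hequiv : v ~[l] u := isEquivalent_of_sub_isBigO_rpow hr hu hvu
  have hupos : ∀ᶠ i in l, 0 < u i := hu.eventually_gt_atTop 0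
  have herror : (fun i ↦ h (v i) - c * v i ^ p) =o[l] fun i ↦ u i ^ q :=
    (hh.comp_tendsto (hequiv.symm.tendsto_atTop hu)).trans_isTheta <|
      hequiv.isTheta.rpow ((hequiv.eventually_pos hupos).mono fun _ ↦ le_of_lt)
        (hupos.mono fun _ ↦ le_of_lt)
  have hshift : (fun i ↦ v i ^ p - u i ^ p) =o[l] fun i ↦ u i ^ q :=
    calc (fun i ↦ v i ^ p - u i ^ p)
        =O[l] fun i ↦ u i ^ (p - 1) * (v i - u i) := isBigO_rpow_sub_rpow hequiv hupos p
      _ =O[l] fun i ↦ u i ^ (p - 1) * u i ^ r := (isBigO_refl _ l).mul hvu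
      _ =ᶠ[l] fun i ↦ u i ^ (p - 1 + r) := hupos.mono fun i hi ↦ (Real.rpow_add hi _ _).symm
      _ =o[l] fun i ↦ u i ^ q := (isLittleO_rpow_rpow_atTop hpq).comp_tendsto hu
  exact (herror.add (hshift.const_mul_left c)).congr_left fun i ↦ by ring

theorem isBigO_rpow_of_sub_const_mul_rpow {h : ℝ → ℝ} {c p q : ℝ} (hqp : q ≤ p)
    (hh : (fun x ↦ h x - c * x ^ p) =o[atTop] fun x ↦ x ^ q) :
    h =O[atTop] fun x ↦ x ^ p := by
  have hpow : (fun x : ℝ ↦ x ^ q) =O[atTop] fun x ↦ x ^ p :=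
    (eq_or_lt_of_le hqp).elim (fun h ↦ h ▸ isBigO_refl _ _) fun h ↦
      (isLittleO_rpow_rpow_atTop h).isBigO
  exact ((hh.isBigO.trans hpow).add (isBigO_const_mul_self c _ _)).congr_left fun x ↦
    sub_add_cancel _ _

end PowerAsymptotics

theorem eventually_deriv_eq_of_eq_const_mul_rpow_add {b b' f f' : ℝ → ℝ} {a β : ℝ}
    (hb' : ∀ᶠ x in atTop, HasDerivAt b (b' x) x)
    (hbf : ∀ᶠ x in atTop, b x = a * x ^ β + f x)
    (hf' : ∀ᶠ x in atTop, HasDerivAt f (f' x) x) :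
    ∀ᶠ x in atTop, b' x = a * β * x ^ (β - 1) + f' x := by
  obtain ⟨X, hX⟩ := eventually_atTop.1 hbf
  filter_upwards [hb', hf', eventually_gt_atTop 0, eventually_gt_atTop X] with x hbx hfx hx hXx
  have hlocal : b =ᶠ[𝓝 x] fun u ↦ a * u ^ β + f u :=
    (eventually_ge_nhds hXx).mono hX
  have hsum : HasDerivAt (fun u ↦ a * u ^ β + f u) (a * (β * x ^ (β - 1)) + f' x) x :=
    ((Real.hasDerivAt_rpow_const (.inl hx.ne')).const_mul a).add hfx
  rw [hbx.unique (hsum.congr_of_eventuallyEq hlocal), mul_assoc]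

section Tube

variable {E : Type*} [SeminormedAddCommGroup E] {b : ℝ → ℝ}

/-- The filter of neighbourhoods of infinity in the domain `{(x, y) | ‖y‖ ≤ b x}`: a property
holds eventually along it if it holds for all points of the domain with `x` large, so that
asymptotics along it are asymptotics as `x → ∞`, uniformly in `y`. -/
def tubeAtTop (E : Type*) [SeminormedAddCommGroup E] (b : ℝ → ℝ) : Filter (ℝ × E) :=
  comap Prod.fst atTop ⊓ 𝓟 {z | ‖z.2‖ ≤ b z.1}

theorem tendsto_fst_tubeAtTop : Tendsto Prod.fst (tubeAtTop E b) atTop :=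
  tendsto_comap.mono_left inf_le_left

theorem eventually_norm_snd_le_tubeAtTop : ∀ᶠ z in tubeAtTop E b, ‖z.2‖ ≤ b z.1 :=
  mem_inf_of_right (mem_principal_self _)

theorem eventually_tubeAtTop {P : ℝ × E → Prop} :
    (∀ᶠ z in tubeAtTop E b, P z) ↔ ∃ X, ∀ x ≥ X, ∀ y, ‖y‖ ≤ b x → P (x, y) := by
  simp only [tubeAtTop, eventually_inf_principal, eventually_comap, eventually_atTop,
    Prod.forall, Set.mem_ofPred_eq]
  exact exists_congr fun X ↦ forall₂_congr fun x _ ↦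
    ⟨fun h y ↦ h x y rfl, fun h _ y hx ↦ hx ▸ h y⟩

theorem isBigO_norm_sq_div_tubeAtTop (hb : ∀ᶠ x in atTop, 0 < b x) :
    (fun z : ℝ × E ↦ ‖z.2‖ ^ 2 / b z.1) =O[tubeAtTop E b] fun z ↦ b z.1 := by
  refine .of_bound' ?_
  filter_upwards [eventually_norm_snd_le_tubeAtTop, tendsto_fst_tubeAtTop.eventually hb]
    with z hz hbz
  rw [Real.norm_of_nonneg (by positivity), Real.norm_of_nonneg hbz.le, div_le_iff₀ hbz, ← sq]
  gcongr

end Tube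

theorem unifLittleO_of_isLittleO {d : ℕ} {b : ℝ → ℝ} {F : ℝ → EuclideanSpace ℝ (Fin d) → ℝ}
    {a : ℝ} (hF : (fun z ↦ F z.1 z.2) =o[tubeAtTop (EuclideanSpace ℝ (Fin d)) b] fun z ↦ z.1 ^ a) :
    UnifLittleO b F a := by
  intro ε hε
  suffices h : ∀ᶠ z in tubeAtTop (EuclideanSpace ℝ (Fin d)) b, |F z.1 z.2| ≤ ε * z.1 ^ a from
    eventually_tubeAtTop.1 h
  filter_upwards [hF.bound hε, tendsto_fst_tubeAtTop.eventually_ge_atTop 0] with z hz hz0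
  rwa [Real.norm_eq_abs, Real.norm_of_nonneg (Real.rpow_nonneg hz0 a)] at hz

theorem stmt_2_general {E : Type*} [SeminormedAddCommGroup E] {a β k q q' : ℝ}
    {b b' f f' : ℝ → ℝ} (hq : 2 * β - 1 < q) (hqβ : q ≤ β) (hq' : 2 * β - 2 < q')
    (hb : ∀ᶠ x in atTop, 0 < b x)
    (hb' : ∀ᶠ x in atTop, HasDerivAt b (b' x) x)
    (hbf : ∀ᶠ x in atTop, b x = a * x ^ β + f x)
    (hf' : ∀ᶠ x in atTop, HasDerivAt f (f' x) x)
    (hfo : f =o[atTop] fun x ↦ x ^ q) (hf'o : f' =o[atTop] fun x ↦ x ^ q') :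
    ((fun z : ℝ × E ↦ b (z.1 + k * ‖z.2‖ ^ 2 / b z.1) - a * z.1 ^ β)
      =o[tubeAtTop E b] fun z ↦ z.1 ^ q) ∧
    ((fun z : ℝ × E ↦ b' (z.1 + k * ‖z.2‖ ^ 2 / b z.1) - a * β * z.1 ^ (β - 1))
      =o[tubeAtTop E b] fun z ↦ z.1 ^ q') := by
  have hβ : β < 1 := by linarith
  have hb_error : (fun x ↦ b x - a * x ^ β) =o[atTop] fun x ↦ x ^ q :=
    hfo.congr' (hbf.mono fun _ h ↦ (sub_eq_of_eq_add' h).symm) .rfl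
  have hb'_error : (fun x ↦ b' x - a * β * x ^ (β - 1)) =o[atTop] fun x ↦ x ^ q' :=
    hf'o.congr' ((eventually_deriv_eq_of_eq_const_mul_rpow_add hb' hbf hf').mono
      fun _ h ↦ (sub_eq_of_eq_add' h).symm) .rfl
  have hshift : (fun z : ℝ × E ↦ z.1 + k * ‖z.2‖ ^ 2 / b z.1 - z.1)
      =O[tubeAtTop E b] fun z ↦ z.1 ^ β := by
    simp only [add_sub_cancel_left, mul_div_assoc]
    exact ((isBigO_norm_sq_div_tubeAtTop hb).const_mul_left k).trans <|
      (isBigO_rpow_of_sub_const_mul_rpow hqβ hb_error).comp_tendsto tendsto_fst_tubeAtTop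
  exact ⟨isLittleO_comp_sub_const_mul_rpow hβ (by linarith) tendsto_fst_tubeAtTop hshift hb_error,
    isLittleO_comp_sub_const_mul_rpow hβ (by linarith) tendsto_fst_tubeAtTop hshift hb'_error⟩

/-- Under assumption (D₂⁺), with `g(x,y) = x + (s₀/(2c₀))·|y|²/b(x)`,
one has, uniformly on `D` as `x → ∞`,
`b(g(x,y)) = a∞·x^β + o(x^{(3β-1)/2})` and `b′(g(x,y)) = a∞·β·x^{β-1} + o(x^{(3β-3)/2})`. -/
theorem stmt_2 (d : ℕ) (hd : 1 ≤ d) (β ainf s₀ c₀ : ℝ)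
    (hβ : -1 < β) (hβ1 : β < 1) (ha : 0 < ainf) (hs₀ : 0 < s₀) (hc₀ : 0 < c₀)
    (b b' f f' f'' : ℝ → ℝ)
    (hbpos : ∀ x : ℝ, 0 < x → 0 < b x)
    (hbnonneg : ∀ x : ℝ, 0 ≤ x → 0 ≤ b x)
    (hbC2 : ContDiffOn ℝ 2 b (Set.Ioi 0))
    (hb' : ∀ x : ℝ, 0 < x → HasDerivAt b (b' x) x)
    (hbf : ∀ x : ℝ, 0 < x → b x = ainf * x ^ β + f x)
    (hf' : ∀ x : ℝ, 0 < x → HasDerivAt f (f' x) x)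
    (hf'' : ∀ x : ℝ, 0 < x → HasDerivAt f' (f'' x) x)
    (hfo : Tendsto (fun x : ℝ => f x / x ^ ((3 * β - 1) / 2)) atTop (𝓝 0))
    (hf'o : Tendsto (fun x : ℝ => f' x / x ^ ((3 * β - 3) / 2)) atTop (𝓝 0))
    (hf''o : Tendsto (fun x : ℝ => f'' x / x ^ ((3 * β - 5) / 2)) atTop (𝓝 0)) :
    UnifLittleO (d := d) b
      (fun x y => b (x + s₀ / (2 * c₀) * ‖y‖ ^ 2 / b x) - ainf * x ^ β)
      ((3 * β - 1) / 2) ∧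
    UnifLittleO (d := d) b
      (fun x y => b' (x + s₀ / (2 * c₀) * ‖y‖ ^ 2 / b x) - ainf * β * x ^ (β - 1))
      ((3 * β - 3) / 2) := by
  have hpos := eventually_gt_atTop (0 : ℝ)
  exact (stmt_2_general (by linarith) (by linarith) (by linarith) (hpos.mono hbpos)
    (hpos.mono hb') (hpos.mono hbf) (hpos.mono hf')
    (isLittleO_rpow_atTop_iff_tendsto_div.2 hfo) (isLittleO_rpow_atTop_iff_tendsto_div.2 hf'o)).imp
      unifLittleO_of_isLittleO unifLittleO_of_isLittleO
end

section
/- As x → ∞, uniformly on D, ⟨∇g(x,y), Σ(x,y)·∇g(x,y)⟩ = Σ^∞_{0,0} + (2s₀/(c₀·a∞))·x^{−β}·Σ_{i=1}^d Σ^∞_{0,i}·y_i + (s₀²/(c₀²·a∞²))·x^{−2β}·Σ_{i,j=1}^d Σ^∞_{i,j}·y_i·y_j + o(1). -/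
open Filter Topology

/-- The gradient `∇g(x,y) = (1 - (s₀/(2c₀))|y|²b′(x)/b(x)², (s₀/c₀)y/b(x)) ∈ ℝ^{1+d}`
of `g(x,y) = x + (s₀/(2c₀))|y|²/b(x)`, with coordinate `0` the `x`-direction. -/
noncomputable def gradg {d : ℕ} (b b' : ℝ → ℝ) (s₀ c₀ : ℝ)
    (x : ℝ) (y : EuclideanSpace ℝ (Fin d)) : Fin (d + 1) → ℝ :=
  Fin.cons (1 - s₀ / (2 * c₀) * ‖y‖ ^ 2 * b' x / (b x) ^ 2)
    (fun i => s₀ / c₀ * y i / b x)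

/-!
On the domain `‖y‖ ≤ b x` the ratio `y / b x` is bounded. Hence the `x`-component of `∇g` is
`1 + O(b')`, where `b' = a β x ^ (β - 1) + f' → 0` because `β < 1`. In the other components,
replacing `b` by the equivalent function `a x ^ β` costs only `o(1)`. So `∇g` is `o(1)`-close to
the bounded vector field `(1, (s₀ / c₀) y / (a x ^ β))`, and a quadratic form evaluated at bounded
vectors tolerates `o(1)` perturbations of its vector and of its matrix. Evaluating `Σ^∞` at that
field gives the claimed expansion exactly.
-/

open Asymptotics

/-- The filter along which `x → ∞` uniformly on the domain `{(x, y) | ‖y‖ ≤ b x}`: it turns uniform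
Landau symbols into ordinary ones. -/
def atTopInside (E : Type*) [Norm E] (b : ℝ → ℝ) : Filter (ℝ × E) :=
  comap Prod.fst atTop ⊓ 𝓟 {p | ‖p.2‖ ≤ b p.1}

section atTopInside

variable {E : Type*} [Norm E] {b : ℝ → ℝ}

lemma tendsto_fst_atTopInside : Tendsto Prod.fst (atTopInside E b) atTop :=
  tendsto_comap.mono_left inf_le_left

lemma eventually_norm_snd_le_atTopInside : ∀ᶠ p in atTopInside E b, ‖p.2‖ ≤ b p.1 :=
  mem_inf_of_right (mem_principal_self _)

lemma eventually_atTopInside {P : ℝ × E → Prop} :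
    (∀ᶠ p in atTopInside E b, P p) ↔ ∃ X, ∀ x ≥ X, ∀ y, ‖y‖ ≤ b x → P (x, y) := by
  simp only [atTopInside, eventually_inf_principal, eventually_comap, eventually_atTop,
    Set.mem_ofPred_eq, Prod.forall]
  exact exists_congr fun X => forall₂_congr fun x _ =>
    ⟨fun h y => h x y rfl, fun h _ y hx => hx ▸ h y⟩

end atTopInside

lemma snd_isBigO_atTopInside {E : Type*} [SeminormedAddCommGroup E] {b : ℝ → ℝ} :
    (Prod.snd : ℝ × E → E) =O[atTopInside E b] fun p => b p.1 :=
  .of_bound' (eventually_norm_snd_le_atTopInside.mono fun _ h => h.trans (le_abs_self _))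

section UnifLittleO

variable {d : ℕ} {b : ℝ → ℝ} {F : ℝ → EuclideanSpace ℝ (Fin d) → ℝ}

lemma unifLittleO_zero_iff :
    UnifLittleO b F 0 ↔ ∀ ε > 0, ∃ X, ∀ x ≥ X, ∀ y, ‖y‖ ≤ b x → |F x y| ≤ ε := by
  simp only [UnifLittleO, Real.rpow_zero, mul_one, gt_iff_lt]

lemma unifLittleO_zero_iff_isLittleO_one :
    UnifLittleO b F 0 ↔ (fun p => F p.1 p.2) =o[atTopInside _ b] fun _ => (1 : ℝ) := by
  simp only [unifLittleO_zero_iff, isLittleO_iff, eventually_atTopInside, Real.norm_eq_abs,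
    abs_one, mul_one, gt_iff_lt]

end UnifLittleO

lemma div_isBigO_one_of_isBigO {α 𝕜 : Type*} [NormedDivisionRing 𝕜] {f g : α → 𝕜} {l : Filter α}
    (h : f =O[l] g) : (fun t => f t / g t) =O[l] fun _ => (1 : ℝ) :=
  (isBigO_one_iff ℝ).2 (div_isBoundedUnder_of_isBigO h)

lemma mul_inv_sub_inv_isLittleO_one {α 𝕜 : Type*} [NormedField 𝕜] {f g h : α → 𝕜} {l : Filter α}
    (hgh : g ~[l] h) (hf : f =O[l] h) :
    (fun t => f t * ((g t)⁻¹ - (h t)⁻¹)) =o[l] fun _ => (1 : ℝ) :=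
  (hf.mul_isLittleO hgh.inv.isLittleO).trans_isBigO
    (by simpa only [div_eq_mul_inv] using! div_isBigO_one_of_isBigO (isBigO_refl h l))

section Perturbation

variable {α R 𝕜 : Type*} [SeminormedRing R] [NormedDivisionRing 𝕜] {l : Filter α}

lemma isLittleO_mul_sub_mul {f f' g g' : α → R} {k m : α → 𝕜}
    (hf : (fun t => f t - f' t) =o[l] k) (hg : (fun t => g t - g' t) =o[l] m)
    (hf' : f' =O[l] k) (hg' : g' =O[l] m) :
    (fun t => f t * g t - f' t * g' t) =o[l] fun t => k t * m t := by
  have hgO : g =O[l] m := (hg.isBigO.add hg').congr_left fun t => sub_add_cancel _ _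
  refine ((hf.mul_isBigO hgO).add (hf'.mul_isLittleO hg)).congr_left fun t => ?_
  noncomm_ring

lemma isLittleO_one_sum_sum_mul_mul_sub {ι : Type*} [Fintype ι] {u v : α → ι → R}
    {A B : α → ι → ι → R} (hu : ∀ i, (fun t => u t i - v t i) =o[l] fun _ => (1 : 𝕜))
    (hA : ∀ i j, (fun t => A t i j - B t i j) =o[l] fun _ => (1 : 𝕜))
    (hv : ∀ i, (fun t => v t i) =O[l] fun _ => (1 : 𝕜))
    (hB : ∀ i j, (fun t => B t i j) =O[l] fun _ => (1 : 𝕜)) :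
    (fun t => ∑ i, ∑ j, u t i * A t i j * u t j - ∑ i, ∑ j, v t i * B t i j * v t j)
      =o[l] fun _ => (1 : 𝕜) := by
  simp only [← Finset.sum_sub_distrib]
  refine .fun_sum fun i _ => .fun_sum fun j _ => ?_
  have huA := isLittleO_mul_sub_mul (hu i) (hA i j) (hv i) (hB i j)
  simpa only [mul_one] using isLittleO_mul_sub_mul huA (hu j) ((hv i).mul (hB i j)) (hv j)

end Perturbation

lemma sum_sum_cons_one_mul_mul_cons_one {R : Type*} [CommRing R] {d : ℕ}
    {M : Matrix (Fin (d + 1)) (Fin (d + 1)) R} (hM : M.IsSymm) (v : Fin d → R) :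
    ∑ i, ∑ j, (Fin.cons 1 v : Fin (d + 1) → R) i * M i j * (Fin.cons 1 v : Fin (d + 1) → R) j =
      M 0 0 + 2 * ∑ i : Fin d, M 0 i.succ * v i +
        ∑ i : Fin d, ∑ j : Fin d, M i.succ j.succ * v i * v j := by
  simp only [Fin.sum_univ_succ, Fin.cons_zero, Fin.cons_succ, one_mul, mul_one,
    hM.apply 0 (Fin.succ _), Finset.sum_add_distrib, mul_comm (v _) (M _ _)]
  ring

section Gradient

variable {d : ℕ} {b w b' : ℝ → ℝ} (s₀ c₀ : ℝ)

lemma apply_snd_isBigO_atTopInside (i : Fin d) :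
    (fun p => p.2 i) =O[atTopInside (EuclideanSpace ℝ (Fin d)) b] fun p => b p.1 :=
  .trans (.of_norm_le fun p => PiLp.norm_apply_le p.2 i) snd_isBigO_atTopInside.norm_left

-- `gradg w 0` serves as the leading-order gradient: `w` is the leading term of `b`, and the slope
-- is set to `0` even though `w` need not be constant.
lemma gradg_zero_right (x : ℝ) (y : EuclideanSpace ℝ (Fin d)) :
    gradg w 0 s₀ c₀ x y = Fin.cons 1 fun i => s₀ / c₀ * y i / w x := by
  simp [gradg]

lemma gradg_zero_right_isBigO_one (hw : b =O[atTop] w) (i : Fin (d + 1)) :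
    (fun p => gradg w 0 s₀ c₀ p.1 p.2 i) =O[atTopInside _ b] fun _ => (1 : ℝ) := by
  have hw' := hw.comp_tendsto
    (tendsto_fst_atTopInside (E := EuclideanSpace ℝ (Fin d)) (b := b))
  simp only [gradg_zero_right]
  cases i using Fin.cases with
  | zero => exact isBigO_refl _ _
  | succ i =>
    simp only [Fin.cons_succ, mul_div_assoc]
    refine IsBigO.const_mul_left ?_ _
    exact div_isBigO_one_of_isBigO ((apply_snd_isBigO_atTopInside i).trans hw')

lemma gradg_sub_gradg_zero_right_isLittleO_one (hw : b ~[atTop] w)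
    (hb' : Tendsto b' atTop (𝓝 0)) (i : Fin (d + 1)) :
    (fun p => gradg b b' s₀ c₀ p.1 p.2 i - gradg w 0 s₀ c₀ p.1 p.2 i)
      =o[atTopInside _ b] fun _ => (1 : ℝ) := by
  have hfst : Tendsto Prod.fst (atTopInside (EuclideanSpace ℝ (Fin d)) b) atTop :=
    tendsto_fst_atTopInside
  simp only [gradg, Pi.zero_apply, mul_zero, zero_div, sub_zero]
  cases i using Fin.cases with
  | zero =>
    have hb'o : (fun p => b' p.1) =o[atTopInside (EuclideanSpace ℝ (Fin d)) b] fun _ => (1 : ℝ) :=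
      (isLittleO_one_iff ℝ).2 (hb'.comp hfst)
    have hratio := (div_isBigO_one_of_isBigO
      (snd_isBigO_atTopInside (E := EuclideanSpace ℝ (Fin d)) (b := b)).norm_left).pow 2
    refine ((hratio.mul_isLittleO hb'o).const_mul_left (-(s₀ / (2 * c₀)))).congr (fun p => ?_)
      fun _ => by simp
    simp only [Fin.cons_zero, div_pow]
    ring
  | succ i =>
    have hy := apply_snd_isBigO_atTopInside (b := b) i
    refine ((mul_inv_sub_inv_isLittleO_one (hw.comp_tendsto hfst)
      (hy.trans (hw.isBigO.comp_tendsto hfst))).const_mul_left (s₀ / c₀)).congr_left fun p => ?_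
    simp only [Fin.cons_succ, Function.comp_apply]
    ring

end Gradient

lemma sum_sum_gradg_mul_mul_gradg_rpow {d : ℕ} {β a x : ℝ} (s₀ c₀ : ℝ)
    {M : Matrix (Fin (d + 1)) (Fin (d + 1)) ℝ} (hM : M.IsSymm) (hx : 0 ≤ x)
    (y : EuclideanSpace ℝ (Fin d)) :
    ∑ i, ∑ j, gradg (fun x => a * x ^ β) 0 s₀ c₀ x y i * M i j *
        gradg (fun x => a * x ^ β) 0 s₀ c₀ x y j =
      M 0 0 + 2 * s₀ / (c₀ * a) * x ^ (-β) * ∑ i : Fin d, M 0 i.succ * y i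
        + s₀ ^ 2 / (c₀ ^ 2 * a ^ 2) * x ^ (-2 * β) *
          ∑ i : Fin d, ∑ j : Fin d, M i.succ j.succ * y i * y j := by
  have hsq : x ^ (-2 * β) = (x ^ (-β)) ^ 2 := by
    rw [← Real.rpow_mul_natCast hx]; congr 1; push_cast; ring
  rw [gradg_zero_right, sum_sum_cons_one_mul_mul_cons_one hM, hsq, Real.rpow_neg hx]
  simp only [Finset.mul_sum]
  congrm _ + ∑ i, ?_ + ∑ i, ∑ j, ?_ <;> ring

section PowerProfile

variable {β a : ℝ} {f : ℝ → ℝ}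

lemma isLittleO_rpow_of_tendsto_div_rpow {r : ℝ} (hf : Tendsto (fun x => f x / x ^ r) atTop (𝓝 0))
    (hr : r ≤ β) : f =o[atTop] fun x => x ^ β := by
  have hfr : f =o[atTop] fun x => x ^ r := by
    refine (isLittleO_iff_tendsto' ?_).2 hf
    filter_upwards [eventually_gt_atTop 0] with x hx h0
    exact absurd h0 (Real.rpow_pos_of_pos hx r).ne'
  refine hfr.trans_isBigO (.of_bound' ?_)
  filter_upwards [eventually_ge_atTop 1] with x hx
  have hx0 : 0 ≤ x := zero_le_one.trans hx
  rw [Real.norm_of_nonneg (Real.rpow_nonneg hx0 r), Real.norm_of_nonneg (Real.rpow_nonneg hx0 β)]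
  exact Real.rpow_le_rpow_of_exponent_le hx hr

lemma tendsto_zero_of_tendsto_div_rpow {r : ℝ} (hf : Tendsto (fun x => f x / x ^ r) atTop (𝓝 0))
    (hr : r ≤ 0) : Tendsto f atTop (𝓝 0) := by
  simpa using isLittleO_rpow_of_tendsto_div_rpow hf hr

lemma const_mul_rpow_add_isEquivalent (ha : a ≠ 0) (hf : f =o[atTop] fun x => x ^ β) :
    (fun x => a * x ^ β + f x) ~[atTop] fun x => a * x ^ β :=
  IsEquivalent.refl.add_isLittleO ((isLittleO_const_mul_right_iff ha).2 hf)

lemma tendsto_zero_of_hasDerivAt_const_mul_rpow_add {b' f' : ℝ → ℝ} (hβ : β < 1)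
    (hb' : ∀ x > 0, HasDerivAt (fun x => a * x ^ β + f x) (b' x) x)
    (hf' : ∀ x > 0, HasDerivAt f (f' x) x) (hf'o : Tendsto f' atTop (𝓝 0)) :
    Tendsto b' atTop (𝓝 0) := by
  have hpow : Tendsto (fun x : ℝ => x ^ (β - 1)) atTop (𝓝 0) := by
    simpa using tendsto_rpow_neg_atTop (sub_pos.2 hβ)
  have hlim : Tendsto (fun x => a * (β * x ^ (β - 1)) + f' x) atTop (𝓝 0) := by
    simpa using ((hpow.const_mul β).const_mul a).add hf'o
  refine hlim.congr' ?_
  filter_upwards [eventually_gt_atTop 0] with x hx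
  exact (((Real.hasDerivAt_rpow_const (.inl hx.ne')).const_mul a).add (hf' x hx)).unique (hb' x hx)

end PowerProfile

theorem stmt_4_general {d : ℕ} {β a s₀ c₀ : ℝ} (hβ : β < 1) (ha : a ≠ 0) (_hc₀ : c₀ ≠ 0)
    {b b' f f' : ℝ → ℝ}
    (hb' : ∀ x : ℝ, 0 < x → HasDerivAt b (b' x) x)
    (hbf : ∀ x : ℝ, 0 < x → b x = a * x ^ β + f x)
    (hf' : ∀ x : ℝ, 0 < x → HasDerivAt f (f' x) x)
    (hfo : f =o[atTop] fun x => x ^ β) (hf'o : Tendsto f' atTop (𝓝 0))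
    {S : ℝ → EuclideanSpace ℝ (Fin d) → Matrix (Fin (d + 1)) (Fin (d + 1)) ℝ}
    {Sinf : Matrix (Fin (d + 1)) (Fin (d + 1)) ℝ} (hSinf : Sinf.IsSymm)
    (hS : ∀ i j, UnifLittleO b (fun x y => S x y i j - Sinf i j) 0) :
    UnifLittleO b
      (fun x y =>
        (∑ i, ∑ j, gradg b b' s₀ c₀ x y i * S x y i j * gradg b b' s₀ c₀ x y j)
          - (Sinf 0 0
            + 2 * s₀ / (c₀ * a) * x ^ (-β) * ∑ i : Fin d, Sinf 0 i.succ * y i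
            + s₀ ^ 2 / (c₀ ^ 2 * a ^ 2) * x ^ (-2 * β) *
                ∑ i : Fin d, ∑ j : Fin d, Sinf i.succ j.succ * y i * y j))
      0 := by
  have hbw : b ~[atTop] fun x => a * x ^ β :=
    (const_mul_rpow_add_isEquivalent ha hfo).congr_left
      ((eventually_gt_atTop 0).mono fun x hx => (hbf x hx).symm)
  have hb'0 : Tendsto b' atTop (𝓝 0) :=
    tendsto_zero_of_hasDerivAt_const_mul_rpow_add hβ (fun x hx => (hb' x hx).congr_of_eventuallyEq
      ((eventually_gt_nhds hx).mono fun z hz => (hbf z hz).symm)) hf' hf'o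
  have hform := isLittleO_one_sum_sum_mul_mul_sub
    (gradg_sub_gradg_zero_right_isLittleO_one s₀ c₀ hbw hb'0)
    (fun i j => unifLittleO_zero_iff_isLittleO_one.1 (hS i j))
    (gradg_zero_right_isBigO_one s₀ c₀ hbw.isBigO) fun i j => isBigO_const_const _ one_ne_zero _
  refine unifLittleO_zero_iff_isLittleO_one.2 (hform.congr' ?_ .rfl)
  filter_upwards [tendsto_fst_atTopInside.eventually (eventually_ge_atTop 0)] with p hp
  rw [sum_sum_gradg_mul_mul_gradg_rpow s₀ c₀ hSinf hp]

/-- Under (D₂⁺) and (C⁺), uniformly on `D` as `x → ∞`,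
`⟨∇g, Σ∇g⟩ = Σ^∞₀₀ + (2s₀/(c₀a∞))x^{-β}∑ᵢΣ^∞₀ᵢyᵢ
  + (s₀²/(c₀²a∞²))x^{-2β}∑ᵢⱼΣ^∞ᵢⱼyᵢyⱼ + o(1)`. -/
theorem stmt_4 (d : ℕ) (hd : 1 ≤ d) (β ainf s₀ c₀ : ℝ)
    (hβ : -1 < β) (hβ1 : β < 1) (ha : 0 < ainf) (hs₀ : 0 < s₀) (hc₀ : 0 < c₀)
    (b b' f f' f'' : ℝ → ℝ)
    (hbpos : ∀ x : ℝ, 0 < x → 0 < b x)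
    (hbnonneg : ∀ x : ℝ, 0 ≤ x → 0 ≤ b x)
    (hbC2 : ContDiffOn ℝ 2 b (Set.Ioi 0))
    (hb' : ∀ x : ℝ, 0 < x → HasDerivAt b (b' x) x)
    (hbf : ∀ x : ℝ, 0 < x → b x = ainf * x ^ β + f x)
    (hf' : ∀ x : ℝ, 0 < x → HasDerivAt f (f' x) x)
    (hf'' : ∀ x : ℝ, 0 < x → HasDerivAt f' (f'' x) x)
    (hfo : Tendsto (fun x : ℝ => f x / x ^ ((3 * β - 1) / 2)) atTop (𝓝 0))
    (hf'o : Tendsto (fun x : ℝ => f' x / x ^ ((3 * β - 3) / 2)) atTop (𝓝 0))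
    (hf''o : Tendsto (fun x : ℝ => f'' x / x ^ ((3 * β - 5) / 2)) atTop (𝓝 0))
    -- Assumption (C⁺): bounded, symmetric positive-definite diffusion matrix,
    -- converging (uniformly on `D`) to `Σ^∞`, with fast convergence of the trace.
    (Smat : ℝ → EuclideanSpace ℝ (Fin d) → Matrix (Fin (d + 1)) (Fin (d + 1)) ℝ)
    (Sinf : Matrix (Fin (d + 1)) (Fin (d + 1)) ℝ)
    (hSbdd : ∃ K : ℝ, ∀ x : ℝ, ∀ y : EuclideanSpace ℝ (Fin d), ‖y‖ ≤ b x →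
      ∀ i j : Fin (d + 1), |Smat x y i j| ≤ K)
    (hSpos : ∀ x : ℝ, ∀ y : EuclideanSpace ℝ (Fin d), ‖y‖ ≤ b x → (Smat x y).PosDef)
    (hSinfpos : Sinf.PosDef)
    (hSconv : ∀ ε : ℝ, 0 < ε → ∃ X : ℝ, ∀ x ≥ X,
      ∀ y : EuclideanSpace ℝ (Fin d), ‖y‖ ≤ b x →
        ∀ i j : Fin (d + 1), |Smat x y i j - Sinf i j| ≤ ε)
    (hStrace : ∀ ε : ℝ, 0 < ε → ∃ X : ℝ, ∀ x ≥ X,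
      ∀ y : EuclideanSpace ℝ (Fin d), ‖y‖ ≤ b x →
        x ^ ((1 - β) / 2) *
          |(∑ i : Fin d, Smat x y i.succ i.succ) - ∑ i : Fin d, Sinf i.succ i.succ|
          ≤ ε) :
    UnifLittleO (d := d) b
      (fun x y =>
        (∑ i : Fin (d + 1), ∑ j : Fin (d + 1),
            gradg b b' s₀ c₀ x y i * Smat x y i j * gradg b b' s₀ c₀ x y j)
          - (Sinf 0 0
            + 2 * s₀ / (c₀ * ainf) * x ^ (-β) * ∑ i : Fin d, Sinf 0 i.succ * y i
            + s₀ ^ 2 / (c₀ ^ 2 * ainf ^ 2) * x ^ (-2 * β) *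
                ∑ i : Fin d, ∑ j : Fin d, Sinf i.succ j.succ * y i * y j))
      0 :=
  stmt_4_general hβ1 ha.ne' hc₀.ne' hb' hbf hf'
    (isLittleO_rpow_of_tendsto_div_rpow hfo (by linarith))
    (tendsto_zero_of_tendsto_div_rpow hf'o (by linarith))
    (Matrix.isHermitian_iff_isSymm.1 hSinfpos.isHermitian)
    fun i j => unifLittleO_zero_iff.2 fun ε hε =>
      (hSconv ε hε).imp fun _ hX x hx y hy => hX x hx y hy i j
end

section
/- Define f̂(x,y) := b₀(g(x,y))²·⟨∇g(x,y), Σ(x,y)·∇g(x,y)⟩ and the quadratic polynomial Q : ℝ^d → ℝ by Q(𝓎) := Σ^∞_{0,0} + (2s₀/(c₀·a∞))·Σ_{i=1}^d Σ^∞_{0,i}·𝓎_i + (s₀²/(c₀²·a∞²))·Σ_{i,j=1}^d Σ^∞_{i,j}·𝓎_i·𝓎_j. Then, as x → ∞, uniformly on D, f̂(x,y) = a∞²·x^{2β}·Q(y/x^β) + o(x^{2β}). -/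
/-!
Put `w = y / b(x)` and `r = b(x) / x ^ β`. In the coordinate `w` the slice of `D` at `x` becomes
the closed unit ball, which is compact and independent of `x`. Since `g(x,y) / x → 1` uniformly on
`D`, also `b₀(g(x,y)) / x ^ β → a∞`, and `x ^ (-2β) f̂(x,y)` is a polynomial in `w`, in the entries
of `Σ(x,y)` and in the scalars `b₀(g(x,y)) / x ^ β → a∞` and `b'(x) → 0`. Replacing these
parameters by their limits gives `a∞² Q(a∞ w)`, while `y / x ^ β = r w` with `r → a∞`. A continuous
function of `(parameters, w)` that vanishes at the limiting parameters for every `w` in a compact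
set tends to zero uniformly in `w`, which is the claim.
-/

open Filter Topology

/-- The quadratic polynomial
`Q(𝓎) = Σ^∞₀₀ + (2s₀/(c₀a∞))∑ᵢΣ^∞₀ᵢ𝓎ᵢ + (s₀²/(c₀²a∞²))∑ᵢⱼΣ^∞ᵢⱼ𝓎ᵢ𝓎ⱼ`. -/
noncomputable def Qpoly {d : ℕ} (Sinf : Matrix (Fin (d + 1)) (Fin (d + 1)) ℝ)
    (s₀ c₀ ainf : ℝ) (q : Fin d → ℝ) : ℝ :=
  Sinf 0 0 + 2 * s₀ / (c₀ * ainf) * ∑ i : Fin d, Sinf 0 i.succ * q i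
    + s₀ ^ 2 / (c₀ ^ 2 * ainf ^ 2) * ∑ i : Fin d, ∑ j : Fin d, Sinf i.succ j.succ * q i * q j

section Compactness

variable {α X Y Z : Type*} [TopologicalSpace X] [TopologicalSpace Y] [TopologicalSpace Z]
  {l : Filter α} {p : α → X} {w : α → Y} {p₀ : X} {z₀ : Z} {K : Set Y}

theorem tendsto_of_eqOn_isCompact {H : X → Y → Z} (hH : Continuous fun q : X × Y => H q.1 q.2)
    (hK : IsCompact K) (hH₀ : ∀ v ∈ K, H p₀ v = z₀) (hp : Tendsto p l (𝓝 p₀))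
    (hw : ∀ᶠ i in l, w i ∈ K) : Tendsto (fun i => H (p i) (w i)) l (𝓝 z₀) := by
  have hpw : Tendsto (fun i => (p i, w i)) l (𝓝ˢ ({p₀} ×ˢ K)) := by
    rw [isCompact_singleton.nhdsSet_prod_eq hK, nhdsSet_singleton]
    exact hp.prodMk ((tendsto_principal.2 hw).mono_right principal_le_nhdsSet)
  refine (hH.tendsto_nhdsSet_nhds ?_).comp hpw
  rintro ⟨q, v⟩ ⟨rfl, hv⟩
  exact hH₀ v hv

end Compactness

section PowerAsymptotics

variable {a β γ : ℝ} {b f f' : ℝ → ℝ}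

theorem tendsto_div_rpow_zero_of_le (hγβ : γ ≤ β)
    (hf : Tendsto (fun x => f x / x ^ γ) atTop (𝓝 0)) :
    Tendsto (fun x => f x / x ^ β) atTop (𝓝 0) := by
  refine squeeze_zero_norm' ?_ (tendsto_zero_iff_norm_tendsto_zero.1 hf)
  filter_upwards [eventually_ge_atTop 1] with x hx
  have hx₀ : 0 < x := zero_lt_one.trans_le hx
  rw [norm_div, norm_div, Real.norm_of_nonneg (Real.rpow_nonneg hx₀.le β),
    Real.norm_of_nonneg (Real.rpow_nonneg hx₀.le γ)]
  gcongr

theorem tendsto_div_rpow_of_eq_const_mul_rpow_add (hγβ : γ ≤ β)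
    (hb : ∀ᶠ x in atTop, b x = a * x ^ β + f x)
    (hf : Tendsto (fun x => f x / x ^ γ) atTop (𝓝 0)) :
    Tendsto (fun x => b x / x ^ β) atTop (𝓝 a) := by
  have h := (tendsto_div_rpow_zero_of_le hγβ hf).const_add a
  rw [add_zero] at h
  refine h.congr' ?_
  filter_upwards [hb, eventually_gt_atTop 0] with x hbx hx
  rw [hbx, add_div, mul_div_cancel_right₀ _ (Real.rpow_pos_of_pos hx β).ne']

theorem tendsto_deriv_of_eq_const_mul_rpow_add (hβ : β < 1) (hγ : γ ≤ 0)
    (hb : ∀ᶠ x in atTop, b x = a * x ^ β + f x) (hf : ∀ᶠ x in atTop, HasDerivAt f (f' x) x)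
    (hf' : Tendsto (fun x => f' x / x ^ γ) atTop (𝓝 0)) : Tendsto (deriv b) atTop (𝓝 0) := by
  have hf'₀ : Tendsto f' atTop (𝓝 0) := by
    simpa only [Real.rpow_zero, div_one] using tendsto_div_rpow_zero_of_le hγ hf'
  have hpow : Tendsto (fun x : ℝ => x ^ (β - 1)) atTop (𝓝 0) := by
    simpa only [neg_sub] using tendsto_rpow_neg_atTop (sub_pos.2 hβ)
  have h := (hpow.const_mul (a * β)).add hf'₀
  rw [mul_zero, add_zero] at h
  refine h.congr' ?_
  obtain ⟨N, hN⟩ := eventually_atTop.1 hb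
  filter_upwards [hf, eventually_gt_atTop 0, eventually_gt_atTop N] with x hfx hx hNx
  have hbx : b =ᶠ[𝓝 x] fun t => a * t ^ β + f t := by
    filter_upwards [lt_mem_nhds hNx] with t ht using hN t ht.le
  have hderiv := ((Real.hasDerivAt_rpow_const (p := β) (Or.inl hx.ne')).const_mul a).add hfx
  rw [(hderiv.congr_of_eventuallyEq hbx).deriv, mul_assoc]

theorem tendsto_div_self_of_tendsto_div_rpow (hβ : β < 1)
    (hb : Tendsto (fun x => b x / x ^ β) atTop (𝓝 a)) :
    Tendsto (fun x => b x / x) atTop (𝓝 0) := by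
  have h := hb.mul (tendsto_rpow_neg_atTop (sub_pos.2 hβ))
  rw [mul_zero] at h
  refine h.congr' ?_
  filter_upwards [eventually_gt_atTop 0] with x hx
  rw [neg_sub, Real.rpow_sub hx, Real.rpow_one,
    div_mul_div_cancel₀ (Real.rpow_pos_of_pos hx β).ne']

theorem tendsto_comp_div_rpow_of_tendsto_div {α : Type*} {l : Filter α} {g x : α → ℝ} {ρ : ℝ}
    (hb : Tendsto (fun t => b t / t ^ β) atTop (𝓝 a)) (hρ : 0 < ρ) (hx : Tendsto x l atTop)
    (hgx : Tendsto (fun i => g i / x i) l (𝓝 ρ)) :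
    Tendsto (fun i => b (g i) / x i ^ β) l (𝓝 (a * ρ ^ β)) := by
  have hx₀ : ∀ᶠ i in l, 0 < x i := hx.eventually_gt_atTop 0
  have hg : Tendsto g l atTop := by
    refine (hgx.pos_mul_atTop hρ hx).congr' ?_
    filter_upwards [hx₀] with i hi using div_mul_cancel₀ _ hi.ne'
  refine ((hb.comp hg).mul (hgx.rpow_const (Or.inl hρ.ne'))).congr' ?_
  filter_upwards [hx₀, hg.eventually_gt_atTop 0] with i hxi hgi
  rw [Function.comp_apply, Real.div_rpow hgi.le hxi.le,
    div_mul_div_cancel₀ (Real.rpow_pos_of_pos hgi β).ne']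

end PowerAsymptotics

/-- The filter of neighbourhoods of `x = ∞` in the domain `{(x, y) : ‖y‖ ≤ b x}`: a limit along it
is a limit as `x → ∞`, uniformly in `y`. -/
def domainAtTop {E : Type*} [Norm E] (b : ℝ → ℝ) : Filter (ℝ × E) :=
  comap Prod.fst atTop ⊓ 𝓟 {p | ‖p.2‖ ≤ b p.1}

section DomainAtTop

variable {E : Type*} {b : ℝ → ℝ}

theorem eventually_domainAtTop_iff [Norm E] {P : ℝ × E → Prop} :
    (∀ᶠ p in domainAtTop b, P p) ↔ ∃ N, ∀ x ≥ N, ∀ y, ‖y‖ ≤ b x → P (x, y) := by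
  simp only [domainAtTop, eventually_inf_principal, eventually_comap, eventually_atTop]
  exact ⟨fun ⟨N, h⟩ => ⟨N, fun x hx y hy => h x hx (x, y) rfl hy⟩,
    fun ⟨N, h⟩ => ⟨N, fun x hx p hp hy => h p.1 (hp ▸ hx) p.2 hy⟩⟩

theorem tendsto_fst_domainAtTop [Norm E] :
    Tendsto Prod.fst (domainAtTop b : Filter (ℝ × E)) atTop :=
  tendsto_comap.mono_left inf_le_left

theorem eventually_norm_le_domainAtTop [Norm E] :
    ∀ᶠ p : ℝ × E in domainAtTop b, ‖p.2‖ ≤ b p.1 :=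
  mem_inf_of_right (mem_principal_self _)

theorem tendsto_matrix_domainAtTop [Norm E] {m n : Type*} {M : ℝ → E → Matrix m n ℝ}
    {M₀ : Matrix m n ℝ} (hM : ∀ ε : ℝ, 0 < ε → ∃ N, ∀ x ≥ N, ∀ y, ‖y‖ ≤ b x →
      ∀ i j, |M x y i j - M₀ i j| ≤ ε) :
    Tendsto (fun p => M p.1 p.2) (domainAtTop b) (𝓝 M₀) := by
  refine tendsto_pi_nhds.2 fun i => tendsto_pi_nhds.2 fun j => Metric.tendsto_nhds.2 fun ε hε => ?_
  obtain ⟨N, hN⟩ := hM (ε / 2) (half_pos hε)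
  exact eventually_domainAtTop_iff.2
    ⟨N, fun x hx y hy => (hN x hx y hy i j).trans_lt (half_lt_self hε)⟩

theorem unifLittleO_iff_tendsto_div {d : ℕ} {F : ℝ → EuclideanSpace ℝ (Fin d) → ℝ} {γ : ℝ} :
    UnifLittleO b F γ ↔ Tendsto (fun p => F p.1 p.2 / p.1 ^ γ) (domainAtTop b) (𝓝 0) := by
  have hpos : ∀ᶠ p : ℝ × EuclideanSpace ℝ (Fin d) in domainAtTop b, 0 < p.1 ^ γ :=
    (tendsto_fst_domainAtTop.eventually_gt_atTop 0).mono fun p hp => Real.rpow_pos_of_pos hp γ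
  rw [← Asymptotics.isLittleO_iff_tendsto' (hpos.mono fun p hp h => absurd h hp.ne'),
    Asymptotics.isLittleO_iff]
  refine forall₂_congr fun ε _ => (eventually_domainAtTop_iff
    (P := fun p => |F p.1 p.2| ≤ ε * p.1 ^ γ)).symm.trans (eventually_congr ?_)
  filter_upwards [hpos] with p hp
  rw [Real.norm_eq_abs, Real.norm_of_nonneg hp.le]

variable [NormedAddCommGroup E] [NormedSpace ℝ E]

theorem eventually_inv_smul_mem_closedBall :
    ∀ᶠ p : ℝ × E in domainAtTop b, (b p.1)⁻¹ • p.2 ∈ Metric.closedBall 0 1 := by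
  filter_upwards [eventually_norm_le_domainAtTop] with p hp
  have hb : 0 ≤ b p.1 := (norm_nonneg _).trans hp
  rw [mem_closedBall_zero_iff, norm_smul, norm_inv, Real.norm_of_nonneg hb, inv_mul_eq_div]
  exact div_le_one_of_le₀ hp hb

theorem tendsto_add_mul_norm_sq_div_div_fst (κ : ℝ)
    (hb : Tendsto (fun x => b x / x) atTop (𝓝 0)) :
    Tendsto (fun p : ℝ × E => (p.1 + κ * ‖p.2‖ ^ 2 / b p.1) / p.1) (domainAtTop b) (𝓝 1) := by
  have hnorm : ∀ᶠ p : ℝ × E in domainAtTop b, ‖(b p.1)⁻¹ • p.2‖ ∈ Set.Icc 0 1 := by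
    filter_upwards [eventually_inv_smul_mem_closedBall] with p hp
    exact ⟨norm_nonneg _, mem_closedBall_zero_iff.1 hp⟩
  have h := tendsto_of_eqOn_isCompact (H := fun t n : ℝ => 1 + κ * n ^ 2 * t) (z₀ := 1)
    (by fun_prop) isCompact_Icc (fun n _ => by ring) (hb.comp tendsto_fst_domainAtTop) hnorm
  refine h.congr' ?_
  filter_upwards [tendsto_fst_domainAtTop.eventually_gt_atTop 0] with p hp
  rw [Function.comp_apply, norm_smul, norm_inv, mul_pow, inv_pow, Real.norm_eq_abs, sq_abs]
  rcases eq_or_ne (b p.1) 0 with hbp | hbp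
  · simp [hbp, hp.ne']
  · field_simp

theorem tendsto_comp_add_mul_norm_sq_div_div_rpow {b₀ : ℝ → ℝ} {a β : ℝ} (κ : ℝ) (hβ : β < 1)
    (hb : Tendsto (fun x => b x / x ^ β) atTop (𝓝 a)) (hb₀ : b₀ =ᶠ[atTop] b) :
    Tendsto (fun p : ℝ × E => b₀ (p.1 + κ * ‖p.2‖ ^ 2 / b p.1) / p.1 ^ β)
      (domainAtTop b) (𝓝 a) := by
  have hb₀β : Tendsto (fun x => b₀ x / x ^ β) atTop (𝓝 a) :=
    hb.congr' (hb₀.symm.div EventuallyEq.rfl)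
  simpa only [Real.one_rpow, mul_one] using
    tendsto_comp_div_rpow_of_tendsto_div hb₀β one_pos tendsto_fst_domainAtTop
      (tendsto_add_mul_norm_sq_div_div_fst κ (tendsto_div_self_of_tendsto_div_rpow hβ hb))

end DomainAtTop

section RescaledForm

open scoped Matrix

variable {d : ℕ}

/-- The gradient `∇g` in the rescaled coordinate `w = y / b(x)`, with `κ = s₀ / (2 c₀)` and
`t = b'(x)`. -/
noncomputable def rescaledGrad (κ t : ℝ) (w : EuclideanSpace ℝ (Fin d)) : Fin (d + 1) → ℝ :=
  Fin.cons (1 - κ * ‖w‖ ^ 2 * t) fun i => 2 * κ * w i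

/-- The function `f̂` in the rescaled coordinate `w = y / b(x)`, divided by `x ^ (2β)`: here `B`
stands for `b₀(g(x,y)) / x ^ β`, `t` for `b'(x)` and `S` for `Σ(x,y)`. -/
noncomputable def rescaledForm (κ B t : ℝ) (S : Matrix (Fin (d + 1)) (Fin (d + 1)) ℝ)
    (w : EuclideanSpace ℝ (Fin d)) : ℝ :=
  B ^ 2 * (rescaledGrad κ t w ⬝ᵥ S *ᵥ rescaledGrad κ t w)

theorem gradg_eq_rescaledGrad (b b' : ℝ → ℝ) (s c x : ℝ) (y : EuclideanSpace ℝ (Fin d)) :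
    gradg b b' s c x y = rescaledGrad (s / (2 * c)) (b' x) ((b x)⁻¹ • y) := by
  refine funext fun i => Fin.cases ?_ (fun i => ?_) i
  · simp only [gradg, rescaledGrad, Fin.cons_zero, norm_smul, norm_inv, Real.norm_eq_abs, mul_pow,
      inv_pow, sq_abs]
    ring
  · simp only [gradg, rescaledGrad, Fin.cons_succ, PiLp.smul_apply, smul_eq_mul]
    ring

theorem sum_mul_mul_eq_dotProduct_mulVec {n R : Type*} [Fintype n] [NonUnitalSemiring R]
    (S : Matrix n n R) (u v : n → R) : ∑ i, ∑ j, u i * S i j * v j = u ⬝ᵥ S *ᵥ v := by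
  simp only [dotProduct, Matrix.mulVec, Finset.mul_sum, mul_assoc]

theorem sq_mul_sum_gradg_div_rpow (b b' : ℝ → ℝ) (s c B β : ℝ)
    (S : Matrix (Fin (d + 1)) (Fin (d + 1)) ℝ) {x : ℝ} (hx : 0 ≤ x)
    (y : EuclideanSpace ℝ (Fin d)) :
    B ^ 2 * (∑ i, ∑ j, gradg b b' s c x y i * S i j * gradg b b' s c x y j) / x ^ (2 * β) =
      rescaledForm (s / (2 * c)) (B / x ^ β) (b' x) S ((b x)⁻¹ • y) := by
  rw [sum_mul_mul_eq_dotProduct_mulVec, gradg_eq_rescaledGrad, rescaledForm, mul_comm 2 β,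
    Real.rpow_mul hx, Real.rpow_two]
  ring

theorem sq_mul_qpoly_eq_rescaledForm {S : Matrix (Fin (d + 1)) (Fin (d + 1)) ℝ} (hS : S.IsSymm)
    (s c a : ℝ) (q : EuclideanSpace ℝ (Fin d)) :
    a ^ 2 * Qpoly S s c a (fun i => q i) = rescaledForm (s / (2 * c)) a 0 S (a⁻¹ • q) := by
  have hcol (i : Fin d) : S i.succ 0 = S 0 i.succ := hS.apply 0 i.succ
  have hlin : ∑ i : Fin d, S 0 i.succ * (2 * (s / (2 * c)) * (a⁻¹ * q i)) =
      s / (c * a) * ∑ i : Fin d, S 0 i.succ * q i := by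
    rw [Finset.mul_sum]
    exact Finset.sum_congr rfl fun i _ => by ring
  have hlin' : ∑ i : Fin d, 2 * (s / (2 * c)) * (a⁻¹ * q i) * S 0 i.succ =
      s / (c * a) * ∑ i : Fin d, S 0 i.succ * q i := by
    simpa only [mul_comm (S 0 _)] using hlin
  have hquad : ∑ i : Fin d, ∑ j : Fin d, 2 * (s / (2 * c)) * (a⁻¹ * q i) * S i.succ j.succ *
        (2 * (s / (2 * c)) * (a⁻¹ * q j)) =
      s ^ 2 / (c ^ 2 * a ^ 2) * ∑ i : Fin d, ∑ j : Fin d, S i.succ j.succ * q i * q j := by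
    simp only [Finset.mul_sum]
    exact Finset.sum_congr rfl fun i _ => Finset.sum_congr rfl fun j _ => by ring
  rw [rescaledForm, ← sum_mul_mul_eq_dotProduct_mulVec]
  simp only [Qpoly, rescaledGrad, Fin.sum_univ_succ, Fin.cons_zero, Fin.cons_succ, hcol,
    PiLp.smul_apply, smul_eq_mul, Finset.sum_add_distrib, mul_zero, sub_zero, one_mul, mul_one,
    hlin, hlin', hquad]
  ring

theorem continuous_rescaledForm {X : Type*} [TopologicalSpace X] (κ : ℝ) {B t : X → ℝ}
    {S : X → Matrix (Fin (d + 1)) (Fin (d + 1)) ℝ} {w : X → EuclideanSpace ℝ (Fin d)}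
    (hB : Continuous B) (ht : Continuous t) (hS : Continuous S) (hw : Continuous w) :
    Continuous fun x => rescaledForm κ (B x) (t x) (S x) (w x) := by
  have hgrad : Continuous fun x => rescaledGrad κ (t x) (w x) :=
    Continuous.finCons (by fun_prop) (by fun_prop)
  exact (hB.pow 2).mul (hgrad.dotProduct (hS.matrix_mulVec hgrad))

theorem tendsto_rescaledForm_sub_rescaledForm_smul {α : Type*} {l : Filter α} (κ : ℝ)
    {B t ρ : α → ℝ} {S : α → Matrix (Fin (d + 1)) (Fin (d + 1)) ℝ}
    {w : α → EuclideanSpace ℝ (Fin d)} {B₀ t₀ : ℝ} {S₀ : Matrix (Fin (d + 1)) (Fin (d + 1)) ℝ}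
    {K : Set (EuclideanSpace ℝ (Fin d))} (hB : Tendsto B l (𝓝 B₀)) (ht : Tendsto t l (𝓝 t₀))
    (hS : Tendsto S l (𝓝 S₀)) (hρ : Tendsto ρ l (𝓝 1)) (hK : IsCompact K)
    (hw : ∀ᶠ i in l, w i ∈ K) :
    Tendsto (fun i => rescaledForm κ (B i) (t i) (S i) (w i) -
      rescaledForm κ B₀ t₀ S₀ (ρ i • w i)) l (𝓝 0) := by
  let H (q : ℝ × ℝ × Matrix (Fin (d + 1)) (Fin (d + 1)) ℝ × ℝ) (v : EuclideanSpace ℝ (Fin d)) :=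
    rescaledForm κ q.1 q.2.1 q.2.2.1 v - rescaledForm κ B₀ t₀ S₀ (q.2.2.2 • v)
  have hH : Continuous fun z : _ × EuclideanSpace ℝ (Fin d) => H z.1 z.2 :=
    (continuous_rescaledForm κ (by fun_prop) (by fun_prop) (by fun_prop) (by fun_prop)).sub
      (continuous_rescaledForm κ (by fun_prop) (by fun_prop) (by fun_prop) (by fun_prop))
  have hH₀ (v) (_ : v ∈ K) : H (B₀, t₀, S₀, 1) v = 0 := by
    simp only [H, one_smul, sub_self]
  have hparams : Tendsto (fun i => (B i, t i, S i, ρ i)) l (𝓝 (B₀, t₀, S₀, 1)) :=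
    hB.prodMk_nhds (ht.prodMk_nhds (hS.prodMk_nhds hρ))
  exact tendsto_of_eqOn_isCompact (H := H) (p := fun i => (B i, t i, S i, ρ i)) hH hK hH₀
    hparams hw

end RescaledForm

theorem stmt_8_general {d : ℕ} {β a s c : ℝ} (hβ : β < 1) (ha : a ≠ 0) (_hc : c ≠ 0)
    {b b' b₀ : ℝ → ℝ} (hb : Tendsto (fun x => b x / x ^ β) atTop (𝓝 a))
    (hb' : ∀ᶠ x in atTop, HasDerivAt b (b' x) x) (hderiv : Tendsto (deriv b) atTop (𝓝 0))
    (hb₀ : b₀ =ᶠ[atTop] b)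
    {S : ℝ → EuclideanSpace ℝ (Fin d) → Matrix (Fin (d + 1)) (Fin (d + 1)) ℝ}
    {S₀ : Matrix (Fin (d + 1)) (Fin (d + 1)) ℝ} (hS₀ : S₀.IsSymm)
    (hS : Tendsto (fun p => S p.1 p.2) (domainAtTop b) (𝓝 S₀)) :
    UnifLittleO b
      (fun x y =>
        b₀ (x + s / (2 * c) * ‖y‖ ^ 2 / b x) ^ 2 *
            (∑ i, ∑ j, gradg b b' s c x y i * S x y i j * gradg b b' s c x y j) -
          a ^ 2 * x ^ (2 * β) * Qpoly S₀ s c a fun i => y i / x ^ β)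
      (2 * β) := by
  have hx := tendsto_fst_domainAtTop (E := EuclideanSpace ℝ (Fin d)) (b := b)
  have hb'₀ : Tendsto b' atTop (𝓝 0) := hderiv.congr' (hb'.mono fun x h => h.deriv)
  have hratio : Tendsto (fun x => a⁻¹ * (b x / x ^ β)) atTop (𝓝 1) := by
    simpa only [inv_mul_cancel₀ ha] using hb.const_mul a⁻¹
  rw [unifLittleO_iff_tendsto_div]
  refine (tendsto_rescaledForm_sub_rescaledForm_smul (s / (2 * c))
    (tendsto_comp_add_mul_norm_sq_div_div_rpow (s / (2 * c)) hβ hb hb₀) (hb'₀.comp hx) hS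
    (hratio.comp hx) (isCompact_closedBall 0 1) eventually_inv_smul_mem_closedBall).congr' ?_
  filter_upwards [hx.eventually_gt_atTop 0, hx.eventually (hb.eventually_ne ha)] with p hp hbp
  have hb_ne : b p.1 ≠ 0 := fun h => hbp (by rw [h, zero_div])
  have hq : (a⁻¹ * (b p.1 / p.1 ^ β)) • (b p.1)⁻¹ • p.2 = a⁻¹ • (p.1 ^ β)⁻¹ • p.2 := by
    simp only [smul_smul]
    congr 1
    field_simp
  have hQ : (fun i => p.2 i / p.1 ^ β) = fun i => ((p.1 ^ β)⁻¹ • p.2) i :=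
    funext fun i => div_eq_inv_mul _ _
  rw [sub_div, sq_mul_sum_gradg_div_rpow b b' s c _ β _ hp.le, mul_right_comm,
    mul_div_cancel_right₀ _ (Real.rpow_pos_of_pos hp _).ne', hQ, sq_mul_qpoly_eq_rescaledForm hS₀,
    Function.comp_apply, Function.comp_apply, hq]

/-- With `f̂(x,y) := b₀(g(x,y))²·⟨∇g(x,y), Σ(x,y)∇g(x,y)⟩`, under (D₂⁺)
and (C⁺), uniformly on `D` as `x → ∞`,
`f̂(x,y) = a∞²·x^{2β}·Q(y/x^β) + o(x^{2β})`. -/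
theorem stmt_8 (d : ℕ) (hd : 1 ≤ d) (β ainf s₀ c₀ : ℝ)
    (hβ : -1 < β) (hβ1 : β < 1) (ha : 0 < ainf) (hs₀ : 0 < s₀) (hc₀ : 0 < c₀)
    (b b' f f' f'' : ℝ → ℝ)
    (hbpos : ∀ x : ℝ, 0 < x → 0 < b x)
    (hbnonneg : ∀ x : ℝ, 0 ≤ x → 0 ≤ b x)
    (hbC2 : ContDiffOn ℝ 2 b (Set.Ioi 0))
    (hb' : ∀ x : ℝ, 0 < x → HasDerivAt b (b' x) x)
    (hbf : ∀ x : ℝ, 0 < x → b x = ainf * x ^ β + f x)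
    (hf' : ∀ x : ℝ, 0 < x → HasDerivAt f (f' x) x)
    (hf'' : ∀ x : ℝ, 0 < x → HasDerivAt f' (f'' x) x)
    (hfo : Tendsto (fun x : ℝ => f x / x ^ ((3 * β - 1) / 2)) atTop (𝓝 0))
    (hf'o : Tendsto (fun x : ℝ => f' x / x ^ ((3 * β - 3) / 2)) atTop (𝓝 0))
    (hf''o : Tendsto (fun x : ℝ => f'' x / x ^ ((3 * β - 5) / 2)) atTop (𝓝 0))
    (Smat : ℝ → EuclideanSpace ℝ (Fin d) → Matrix (Fin (d + 1)) (Fin (d + 1)) ℝ)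
    (Sinf : Matrix (Fin (d + 1)) (Fin (d + 1)) ℝ)
    (hSbdd : ∃ K : ℝ, ∀ x : ℝ, ∀ y : EuclideanSpace ℝ (Fin d), ‖y‖ ≤ b x →
      ∀ i j : Fin (d + 1), |Smat x y i j| ≤ K)
    (hSpos : ∀ x : ℝ, ∀ y : EuclideanSpace ℝ (Fin d), ‖y‖ ≤ b x → (Smat x y).PosDef)
    (hSinfpos : Sinf.PosDef)
    (hSconv : ∀ ε : ℝ, 0 < ε → ∃ X : ℝ, ∀ x ≥ X,
      ∀ y : EuclideanSpace ℝ (Fin d), ‖y‖ ≤ b x →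
        ∀ i j : Fin (d + 1), |Smat x y i j - Sinf i j| ≤ ε)
    (hStrace : ∀ ε : ℝ, 0 < ε → ∃ X : ℝ, ∀ x ≥ X,
      ∀ y : EuclideanSpace ℝ (Fin d), ‖y‖ ≤ b x →
        x ^ ((1 - β) / 2) *
          |(∑ i : Fin d, Smat x y i.succ i.succ) - ∑ i : Fin d, Sinf i.succ i.succ|
          ≤ ε)
    (b₀ : ℝ → ℝ)
    (hb₀smooth : ContDiffOn ℝ (⊤ : ℕ∞) b₀ (Set.Ici 0))
    (hb₀zero : ∀ x ∈ Set.Icc (0:ℝ) (1/2), b₀ x = 0)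
    (hb₀b : ∀ x : ℝ, 1 ≤ x → b₀ x = b x)
    (hb₀nonneg : ∀ x : ℝ, 0 ≤ x → 0 ≤ b₀ x) :
    UnifLittleO (d := d) b
      (fun x y =>
        (b₀ (x + s₀ / (2 * c₀) * ‖y‖ ^ 2 / b x)) ^ 2 *
            (∑ i : Fin (d + 1), ∑ j : Fin (d + 1),
              gradg b b' s₀ c₀ x y i * Smat x y i j * gradg b b' s₀ c₀ x y j)
          - ainf ^ 2 * x ^ (2 * β) *
              Qpoly Sinf s₀ c₀ ainf (fun i => y i / x ^ β))
      (2 * β) := by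
  have hpos : ∀ᶠ x : ℝ in atTop, 0 < x := eventually_gt_atTop 0
  exact stmt_8_general hβ1 ha.ne' hc₀.ne'
    (tendsto_div_rpow_of_eq_const_mul_rpow_add (by linarith) (hpos.mono hbf) hfo) (hpos.mono hb')
    (tendsto_deriv_of_eq_const_mul_rpow_add hβ1 (by linarith) (hpos.mono hbf) (hpos.mono hf') hf'o)
    ((eventually_ge_atTop 1).mono hb₀b) hSinfpos.isHermitian (tendsto_matrix_domainAtTop hSconv)
end

section
/- Under the stated hypotheses, Σ_{k=1}^n (T_{k+1} − T_k)·|T_k^α − T_{k+1}^α| = o(T_n^{1+α}) as n → ∞. -/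
open Filter Topology

/-!
With `p = 1 + α > 0`, the increment of `T ^ p` from `T k` to `T (k + 1)` is asymptotic to
`p * T k ^ α * (T (k + 1) - T k)` as soon as `T (k + 1) / T k → 1`, whereas
`|T k ^ α - T (k + 1) ^ α| = o(T k ^ α)`. So the summand is negligible against the increment of
`T ^ p`, and the increments of `T ^ p` telescope to at most `T n ^ p`. The recursion gives ratios
tending to `1` because the step `C² T ^ α 𝔰₄(T)` is `o(T)`, which is where `α < 1` enters.
-/

open Asymptotics Set

section Rpow

theorem rpow_sub_one_isEquivalent (p : ℝ) :
    (fun x : ℝ => x ^ p - 1) ~[𝓝 1] fun x => p * (x - 1) := by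
  rcases eq_or_ne p 0 with rfl | hp
  · simpa only [Real.rpow_zero, sub_self, zero_mul] using IsEquivalent.refl
  · have hderiv : HasDerivAt (fun x : ℝ => x ^ p) p 1 := by
      simpa only [Real.one_rpow, mul_one] using
        Real.hasDerivAt_rpow_const (x := 1) (p := p) (Or.inl one_ne_zero)
    refine (hderiv.isLittleO.const_mul_right hp).congr_left fun x => ?_
    simp only [Real.one_rpow, smul_eq_mul, mul_comm p, Pi.sub_apply]

theorem rpow_sub_rpow_isEquivalent {ι : Type*} {l : Filter ι} {u v : ι → ℝ} (p : ℝ)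
    (huv : u ~[l] v) (hv : ∀ᶠ i in l, 0 < v i) :
    (fun i => u i ^ p - v i ^ p) ~[l] fun i => p * (v i ^ (p - 1) * (u i - v i)) := by
  have hratio : Tendsto (u / v) l (𝓝 1) :=
    (isEquivalent_iff_tendsto_one (hv.mono fun _ h => h.ne')).1 huv
  have hscaled := (IsEquivalent.refl (u := fun i => v i ^ p)).mul
    ((rpow_sub_one_isEquivalent p).comp_tendsto hratio)
  refine (hscaled.congr_left ?_).congr_right ?_
  · filter_upwards [hv, huv.eventually_pos hv] with i hvi hui
    simp only [Pi.mul_apply, Function.comp_apply, Pi.div_apply, Real.div_rpow hui.le hvi.le]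
    have := (Real.rpow_pos_of_pos hvi p).ne'
    field_simp
  · filter_upwards [hv] with i hvi
    simp only [Pi.mul_apply, Function.comp_apply, Pi.div_apply, Real.rpow_sub_one hvi.ne']
    field_simp

theorem isLittleO_sub_mul_abs_rpow_sub {ι : Type*} {l : Filter ι} {u v : ι → ℝ} {α : ℝ}
    (hα : 1 + α ≠ 0) (huv : u ~[l] v) (hv₀ : 0 ≤ v) (hv : ∀ᶠ i in l, 0 < v i) :
    (fun i => (u i - v i) * |v i ^ α - u i ^ α|) =o[l]
      fun i => u i ^ (1 + α) - v i ^ (1 + α) := by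
  have hpow : (fun i => |v i ^ α - u i ^ α|) =o[l] fun i => v i ^ α :=
    (huv.rpow hv₀ (r := α)).isLittleO.norm_left.congr_left fun i => abs_sub_comm _ _
  have hincr := rpow_sub_rpow_isEquivalent (1 + α) huv hv
  simp only [add_sub_cancel_left] at hincr
  calc
    _ =o[l] fun i => (u i - v i) * v i ^ α := (isBigO_refl _ l).mul_isLittleO hpow
    _ = fun i => v i ^ α * (u i - v i) := funext fun _ => mul_comm _ _
    _ =O[l] fun i => (1 + α) * (v i ^ α * (u i - v i)) := isBigO_self_const_mul hα _ l
    _ =O[l] fun i => u i ^ (1 + α) - v i ^ (1 + α) := hincr.isBigO_symm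

theorem isLittleO_rpow_of_le_mul_log {f : ℝ → ℝ} {K r : ℝ} (hr : 0 < r)
    (hf : ∀ᶠ x in atTop, 0 ≤ f x) (hfK : ∀ᶠ x in atTop, f x ≤ K * Real.log x) :
    f =o[atTop] fun x => x ^ r := by
  refine IsBigO.trans_isLittleO (.of_bound K ?_) (isLittleO_log_rpow_atTop hr)
  filter_upwards [hf, hfK, eventually_ge_atTop 1] with x hx hxK hx1
  rwa [Real.norm_of_nonneg hx, Real.norm_of_nonneg (Real.log_nonneg hx1)]

end Rpow

section Telescoping

variable {S : ℕ → ℝ}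

theorem isLittleO_sum_range_of_isLittleO_sub {E : Type*} [NormedAddCommGroup E] {f : ℕ → E}
    (hmono : Monotone S) (htop : Tendsto S atTop atTop)
    (hf : f =o[atTop] fun n => S (n + 1) - S n) :
    (fun n => ∑ k ∈ Finset.range n, f k) =o[atTop] S := by
  have hsum := hf.sum_range (fun n => sub_nonneg.2 (hmono n.le_succ))
  simp only [Finset.sum_range_sub, sub_eq_add_neg _ (S 0)] at hsum
  have hnorm : Tendsto (norm ∘ S) atTop atTop := tendsto_norm_atTop_atTop.comp htop
  exact (hsum (tendsto_atTop_add_const_right _ _ htop)).trans_isBigO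
    (IsEquivalent.refl.add_const_of_norm_tendsto_atTop hnorm).isBigO

theorem isLittleO_sum_range_sub_mul_abs_rpow_sub {α : ℝ} (hα : 0 < 1 + α) (hS₀ : 0 ≤ S)
    (hmono : Monotone S) (htop : Tendsto S atTop atTop)
    (hratio : (fun n => S (n + 1)) ~[atTop] S) :
    (fun n => ∑ k ∈ Finset.range (n + 1), (S (k + 1) - S k) * |S k ^ α - S (k + 1) ^ α|) =o[atTop]
      fun n => S n ^ (1 + α) := by
  have hsum := isLittleO_sum_range_of_isLittleO_sub
    (fun m _ hmn => Real.rpow_le_rpow (hS₀ m) (hmono hmn) hα.le)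
    ((tendsto_rpow_atTop hα).comp htop)
    (isLittleO_sub_mul_abs_rpow_sub hα.ne' hratio hS₀ (htop.eventually_gt_atTop 0))
  exact (hsum.comp_tendsto (tendsto_add_atTop_nat 1)).trans_isBigO
    (hratio.rpow hS₀ (r := 1 + α)).isBigO

end Telescoping

section Recursion

variable {S : ℕ → ℝ} {f g : ℝ → ℝ}

theorem monotone_of_succ_eq_add (hS : ∀ n, S (n + 1) = S n + f (S n))
    (hf : ∀ x ≥ S 0, 0 ≤ f x) : Monotone S := by
  have hstep (n : ℕ) (hn : S 0 ≤ S n) : S n ≤ S (n + 1) :=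
    (le_add_of_nonneg_right (hf _ hn)).trans_eq (hS n).symm
  have hge (n : ℕ) : S 0 ≤ S n := by
    induction n with
    | zero => exact le_rfl
    | succ n ih => exact ih.trans (hstep n ih)
  exact monotone_nat_of_le_succ fun n => hstep n (hge n)

/- A finite limit `L` would force the increments, hence `g (S n)`, to tend to `0`, while
continuity makes `g (S n)` tend to `g L > 0`. -/
theorem tendsto_atTop_of_succ_eq_add (hS : ∀ n, S (n + 1) = S n + f (S n))
    (hgf : ∀ x ≥ S 0, g x ≤ f x) (hg : ∀ x ≥ S 0, 0 < g x) (hcont : ContinuousOn g (Ici (S 0))) :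
    Tendsto S atTop atTop := by
  have hmono := monotone_of_succ_eq_add hS fun x hx => (hg x hx).le.trans (hgf x hx)
  have hge (n : ℕ) : S 0 ≤ S n := hmono n.zero_le
  refine (tendsto_atTop_of_monotone hmono).resolve_right ?_
  rintro ⟨L, hL⟩
  have hL₀ : S 0 ≤ L := ge_of_tendsto' hL hge
  have hgL : Tendsto (fun n => g (S n)) atTop (𝓝 (g L)) :=
    (hcont L hL₀).tendsto.comp (tendsto_nhdsWithin_iff.2 ⟨hL, .of_forall hge⟩)
  have hincr : Tendsto (fun n => S (n + 1) - S n) atTop (𝓝 0) := by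
    simpa only [Function.comp_def, sub_self] using (hL.comp (tendsto_add_atTop_nat 1)).sub hL
  have hle : g L ≤ 0 := le_of_tendsto_of_tendsto' hgL hincr fun n => by
    simpa only [hS, add_sub_cancel_left] using hgf (S n) (hge n)
  exact hle.not_gt (hg L hL₀)

theorem succ_isEquivalent_of_succ_eq_add (hS : ∀ n, S (n + 1) = S n + f (S n))
    (htop : Tendsto S atTop atTop) (hf : f =o[atTop] fun x => x) :
    (fun n => S (n + 1)) ~[atTop] S := by
  simp only [hS]
  exact IsEquivalent.refl.add_isLittleO (hf.comp_tendsto htop)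

end Recursion

theorem rpow_mul_isLittleO_id {s : ℝ → ℝ} {c α : ℝ} (hs : s =o[atTop] fun x => x ^ (1 - α)) :
    (fun x => c * x ^ α * s x) =o[atTop] fun x => x := by
  refine ((isBigO_const_mul_self c (fun x : ℝ => x ^ α) atTop).mul_isLittleO hs).congr' .rfl ?_
  filter_upwards [eventually_gt_atTop 0] with x hx
  rw [← Real.rpow_add hx, add_sub_cancel, Real.rpow_one]

theorem two_mul_div_one_add_mem_Ioo {β : ℝ} (hβ : -(1 / 3 : ℝ) < β) (hβ1 : β < 1) :
    2 * β / (1 + β) ∈ Ioo (-1) 1 := by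
  have hpos : 0 < 1 + β := by linarith
  exact ⟨by rw [lt_div_iff₀ hpos]; linarith, by rw [div_lt_one hpos]; linarith⟩

theorem stmt_10_general {α c : ℝ} (hα : -1 < α) (hc : 0 < c) {s : ℝ → ℝ}
    (hs_ge : ∀ x, 0 < x → 1 ≤ s x) (hs : s =o[atTop] fun x => x ^ (1 - α))
    {T : ℕ → ℝ} (hT1 : 0 < T 1)
    (hTrec : ∀ n : ℕ, 1 ≤ n → T (n + 1) = T n + c * T n ^ α * s (T n)) :
    Tendsto (fun n : ℕ =>
        (∑ k ∈ Finset.Icc 1 n, (T (k + 1) - T k) * |T k ^ α - T (k + 1) ^ α|)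
          / T n ^ (1 + α)) atTop (𝓝 0) := by
  let S (n : ℕ) : ℝ := T (n + 1)
  have hS (n : ℕ) : S (n + 1) = S n + c * S n ^ α * s (S n) := hTrec (n + 1) n.succ_pos
  have hstep_lower (x : ℝ) (hx : x ≥ S 0) : 0 < c * x ^ α ∧ c * x ^ α ≤ c * x ^ α * s x := by
    have hx₀ : 0 < x := hT1.trans_le hx
    have hpos : 0 < c * x ^ α := mul_pos hc (Real.rpow_pos_of_pos hx₀ α)
    exact ⟨hpos, le_mul_of_one_le_right hpos.le (hs_ge x hx₀)⟩
  have hmono : Monotone S := monotone_of_succ_eq_add (f := fun x => c * x ^ α * s x) hS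
    fun x hx => (hstep_lower x hx).1.le.trans (hstep_lower x hx).2
  have hcont : ContinuousOn (fun x => c * x ^ α) (Ici (S 0)) := fun x hx =>
    ((Real.continuousAt_rpow_const x α (.inl (hT1.trans_le hx).ne')).const_mul c).continuousWithinAt
  have htop : Tendsto S atTop atTop := tendsto_atTop_of_succ_eq_add hS
    (fun x hx => (hstep_lower x hx).2) (fun x hx => (hstep_lower x hx).1) hcont
  have hratio : (fun n => S (n + 1)) ~[atTop] S :=
    succ_isEquivalent_of_succ_eq_add hS htop (rpow_mul_isLittleO_id hs)
  have hS₀ : 0 ≤ S := fun n => hT1.le.trans (hmono n.zero_le)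
  have hsum := isLittleO_sum_range_sub_mul_abs_rpow_sub (neg_lt_iff_pos_add'.1 hα)
    hS₀ hmono htop hratio
  rw [← tendsto_add_atTop_iff_nat 1]
  refine hsum.tendsto_div_nhds_zero.congr fun n => ?_
  rw [Finset.range_eq_Ico, Finset.sum_Ico_add'
    (fun k => (T (k + 1) - T k) * |T k ^ α - T (k + 1) ^ α|), zero_add,
    Finset.Ico_add_one_right_eq_Icc]

/-- With `β ∈ (-1/3,1)`, `α = 2β/(1+β)`, `C > 0`, `𝔰₄ : (0,∞) → [1,∞)`
with `𝔰₄(T) → ∞` and `𝔰₄(T) = O(log T)`, and the sequence `T₁ = 1`,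
`T_{n+1} = T_n + C²·T_n^α·𝔰₄(T_n)`, one has
`∑_{k=1}^n (T_{k+1} - T_k)·|T_k^α - T_{k+1}^α| = o(T_n^{1+α})` as `n → ∞`. -/
theorem stmt_10 (β C α : ℝ) (hβ : -(1/3 : ℝ) < β) (hβ1 : β < 1)
    (hα : α = 2 * β / (1 + β)) (hC : 0 < C)
    (s4 : ℝ → ℝ) (hs4_ge : ∀ T : ℝ, 0 < T → 1 ≤ s4 T)
    (hs4_top : Tendsto s4 atTop atTop)
    (hs4_log : ∃ K X : ℝ, ∀ T ≥ X, s4 T ≤ K * Real.log T)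
    (T : ℕ → ℝ) (hT1 : T 1 = 1)
    (hTrec : ∀ n : ℕ, 1 ≤ n → T (n + 1) = T n + C ^ 2 * T n ^ α * s4 (T n)) :
    Tendsto (fun n : ℕ =>
        (∑ k ∈ Finset.Icc 1 n, (T (k + 1) - T k) * |T k ^ α - T (k + 1) ^ α|)
          / T n ^ (1 + α)) atTop (𝓝 0) := by
  obtain ⟨K, X, hK⟩ := hs4_log
  obtain ⟨hα_gt, hα_lt⟩ : α ∈ Ioo (-1) 1 := hα ▸ two_mul_div_one_add_mem_Ioo hβ hβ1
  exact stmt_10_general hα_gt (pow_pos hC 2) hs4_ge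
    (isLittleO_rpow_of_le_mul_log (sub_pos.2 hα_lt)
      ((eventually_gt_atTop 0).mono fun x hx => zero_le_one.trans (hs4_ge x hx))
      ((eventually_ge_atTop X).mono hK))
    (hT1 ▸ one_pos) hTrec
end

section
/- Under the stated hypotheses, Σ_{k=1}^n (T_{k+1} − T_k)·T_k^α = (T_n^{1+α}/(1+α))·(1 + o(1)) as n → ∞. -/
open Filter Topology

/-!
Since the increments of `T` are `o(T)`, differentiating `x ↦ x ^ (1 + α)` at the limit `1` of
`T (k + 1) / T k` makes `(T (k + 1) - T k) * T k ^ α` equivalent to the telescoping term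
`(T (k + 1) ^ (1 + α) - T k ^ (1 + α)) / (1 + α)`. Equivalent nonnegative terms with divergent sums
have equivalent partial sums, which gives the claim once `T` diverges; it does, because a finite
limit would be a point where the increments cannot tend to zero.
-/

open Asymptotics

theorem isEquivalent_rpow_sub_rpow_div {ι : Type*} {l : Filter ι} {u v : ι → ℝ} {p : ℝ}
    (hp : p ≠ 0) (huv : u ~[l] v) (hv : ∀ᶠ i in l, 0 < v i) :
    (fun i => (u i ^ p - v i ^ p) / p) ~[l] fun i => (u i - v i) * v i ^ (p - 1) := by
  have hratio : Tendsto (u / v) l (𝓝 1) :=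
    (isEquivalent_iff_tendsto_one (hv.mono fun _ h => h.ne')).1 huv
  have hderiv : (fun x : ℝ => x ^ p - 1 - (x - 1) * p) =o[𝓝 1] fun x => x - 1 := by
    simpa using
      (Real.hasDerivAt_rpow_const (x := 1) (p := p) (Or.inl one_ne_zero)).isLittleO
  have hscaled := ((hderiv.comp_tendsto hratio).mul_isBigO
    (isBigO_refl (fun i => v i ^ p) l)).const_mul_left p⁻¹
  refine IsLittleO.isEquivalent (hscaled.congr' ?_ ?_)
  · filter_upwards [hv, huv.eventually_pos hv] with i hvi hui
    simp only [Function.comp_apply, Pi.div_apply, Pi.sub_apply, Real.div_rpow hui.le hvi.le,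
      Real.rpow_sub_one hvi.ne']
    field_simp
  · filter_upwards [hv] with i hvi
    simp only [Function.comp_apply, Pi.div_apply, Real.rpow_sub_one hvi.ne']
    field_simp

theorem isEquivalent_sum_range {a b : ℕ → ℝ} (hab : a ~[atTop] b) (hb : 0 ≤ b)
    (hb_top : Tendsto (fun n => ∑ k ∈ Finset.range n, b k) atTop atTop) :
    (fun n => ∑ k ∈ Finset.range n, a k) ~[atTop] fun n => ∑ k ∈ Finset.range n, b k :=
  (hab.isLittleO.sum_range hb hb_top).congr_left fun _ => Finset.sum_sub_distrib _ _

theorem isEquivalent_sum_range_sub_mul_rpow {α : ℝ} (hα : -1 < α) {T : ℕ → ℝ}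
    (hT_pos : 0 < T 0) (hT_mono : Monotone T) (hT_top : Tendsto T atTop atTop)
    (hT_succ : (fun n => T (n + 1)) ~[atTop] T) :
    (fun n => ∑ k ∈ Finset.range n, (T (k + 1) - T k) * T k ^ α)
      ~[atTop] fun n => T n ^ (1 + α) / (1 + α) := by
  have hp : 0 < 1 + α := by linarith
  have hpos (n : ℕ) : 0 < T n := hT_pos.trans_le (hT_mono n.zero_le)
  have hpow_top : Tendsto (fun n => T n ^ (1 + α) / (1 + α)) atTop atTop :=
    ((tendsto_rpow_atTop hp).comp hT_top).atTop_div_const hp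
  have hterms : (fun k => (T (k + 1) - T k) * T k ^ α)
      ~[atTop] fun k => T (k + 1) ^ (1 + α) / (1 + α) - T k ^ (1 + α) / (1 + α) := by
    simpa only [sub_div, add_sub_cancel_left] using
      (isEquivalent_rpow_sub_rpow_div hp.ne' hT_succ (.of_forall hpos)).symm
  have hnonneg (k : ℕ) : 0 ≤ T (k + 1) ^ (1 + α) / (1 + α) - T k ^ (1 + α) / (1 + α) := by
    have := hpos k
    have := hT_mono k.le_succ
    rw [sub_nonneg]
    gcongr
  have htelescope (n : ℕ) :
      ∑ k ∈ Finset.range n, (T (k + 1) ^ (1 + α) / (1 + α) - T k ^ (1 + α) / (1 + α))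
        = T n ^ (1 + α) / (1 + α) + -(T 0 ^ (1 + α) / (1 + α)) := by
    rw [Finset.sum_range_sub fun k => T k ^ (1 + α) / (1 + α), sub_eq_add_neg]
  have hsum := isEquivalent_sum_range hterms hnonneg
    (by simpa only [htelescope] using tendsto_atTop_add_const_right _ _ hpow_top)
  simp only [htelescope] at hsum
  exact hsum.trans
    (IsEquivalent.refl.add_const_of_norm_tendsto_atTop (tendsto_norm_atTop_atTop.comp hpow_top))

theorem sum_Icc_one_eq_sum_range {M : Type*} [AddCommMonoid M] (a : ℕ → M) (n : ℕ) :
    ∑ k ∈ Finset.Icc 1 n, a k = ∑ k ∈ Finset.range n, a (k + 1) := by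
  rw [Finset.range_eq_Ico, Finset.sum_Ico_add' a 0 n 1]
  rfl

section Recursion

variable {T : ℕ → ℝ} {g : ℝ → ℝ}

theorem monotone_of_add_le (hg_nonneg : ∀ x, T 0 ≤ x → 0 ≤ g x)
    (hT : ∀ n, T n + g (T n) ≤ T (n + 1)) : Monotone T := by
  have hlower (n : ℕ) : T 0 ≤ T n := by
    induction n with
    | zero => exact le_rfl
    | succ n ih => linarith [hg_nonneg _ ih, hT n]
  exact monotone_nat_of_le_succ fun n => by linarith [hg_nonneg _ (hlower n), hT n]

theorem tendsto_atTop_of_add_le (hg : ContinuousOn g (Set.Ici (T 0)))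
    (hg_pos : ∀ x, T 0 ≤ x → 0 < g x) (hT : ∀ n, T n + g (T n) ≤ T (n + 1)) :
    Tendsto T atTop atTop := by
  have hmono : Monotone T := monotone_of_add_le (fun x hx => (hg_pos x hx).le) hT
  refine (tendsto_atTop_of_monotone hmono).resolve_right ?_
  rintro ⟨L, hL⟩
  have hL_mem : T 0 ≤ L := hmono.ge_of_tendsto hL 0
  have hg_lim : Tendsto (fun n => g (T n)) atTop (𝓝 (g L)) :=
    (hg L hL_mem).tendsto.comp (tendsto_nhdsWithin_iff.2
      ⟨hL, .of_forall fun n => hmono n.zero_le⟩)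
  have hfixed : L + g L ≤ L :=
    le_of_tendsto_of_tendsto' (hL.add hg_lim) ((tendsto_add_atTop_iff_nat 1).2 hL) hT
  linarith [hg_pos L hL_mem]

theorem isEquivalent_succ_of_isLittleO_id {f : ℝ → ℝ} (hT_top : Tendsto T atTop atTop)
    (hf : f =o[atTop] (id : ℝ → ℝ)) (hT : ∀ᶠ n in atTop, T (n + 1) = T n + f (T n)) :
    (fun n => T (n + 1)) ~[atTop] T := by
  refine IsLittleO.isEquivalent ((hf.comp_tendsto hT_top).congr' ?_ .rfl)
  filter_upwards [hT] with n hn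
  simp only [Function.comp_apply, Pi.sub_apply, hn, add_sub_cancel_left]

end Recursion

theorem isBigO_of_nonneg_of_le_const_mul {ι : Type*} {l : Filter ι} {u v : ι → ℝ} {K : ℝ}
    (hu : ∀ᶠ i in l, 0 ≤ u i) (huv : ∀ᶠ i in l, u i ≤ K * v i) : u =O[l] v := by
  refine (IsBigO.of_norm_eventuallyLE (g := fun i => K * v i) ?_).trans
    (isBigO_const_mul_self K v l)
  filter_upwards [hu, huv] with i hi hiK
  rwa [Real.norm_of_nonneg hi]

theorem const_mul_rpow_mul_isLittleO_id {α : ℝ} (hα : α < 1) (c : ℝ) {s : ℝ → ℝ}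
    (hs : s =O[atTop] Real.log) : (fun x => c * x ^ α * s x) =o[atTop] (id : ℝ → ℝ) := by
  have hs_rpow : s =o[atTop] fun x => x ^ (1 - α) :=
    hs.trans_isLittleO (isLittleO_log_rpow_atTop (sub_pos.2 hα))
  refine ((isBigO_const_mul_self c (fun x : ℝ => x ^ α) atTop).mul_isLittleO hs_rpow).congr' .rfl ?_
  filter_upwards [eventually_gt_atTop 0] with x hx
  rw [← Real.rpow_add hx, add_sub_cancel, Real.rpow_one, id]

theorem neg_one_lt_two_mul_div_one_add {β : ℝ} (hβ : -(1 / 3) < β) : -1 < 2 * β / (1 + β) := by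
  rw [lt_div_iff₀ (by linarith)]
  linarith

theorem two_mul_div_one_add_lt_one {β : ℝ} (hβ : -1 < β) (hβ1 : β < 1) :
    2 * β / (1 + β) < 1 := by
  rw [div_lt_one (by linarith)]
  linarith

/-- The continuous positive minorant `g` of the increments rules out a finite limit of `T`. -/
theorem stmt_11_general {α : ℝ} (hα : -1 < α) {f g : ℝ → ℝ} {T : ℕ → ℝ} (hT1 : 0 < T 1)
    (hg : ContinuousOn g (Set.Ici (T 1))) (hg_pos : ∀ x, T 1 ≤ x → 0 < g x)
    (hgf : ∀ x, T 1 ≤ x → g x ≤ f x) (hf : f =o[atTop] (id : ℝ → ℝ))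
    (hTrec : ∀ n : ℕ, 1 ≤ n → T (n + 1) = T n + f (T n)) :
    Tendsto (fun n : ℕ =>
        (∑ k ∈ Finset.Icc 1 n, (T (k + 1) - T k) * T k ^ α)
          / (T n ^ (1 + α) / (1 + α))) atTop (𝓝 1) := by
  have hf_nonneg (x : ℝ) (hx : T 1 ≤ x) : 0 ≤ f x := (hg_pos x hx).le.trans (hgf x hx)
  have hmono : Monotone fun n => T (n + 1) :=
    monotone_of_add_le hf_nonneg fun n => (hTrec (n + 1) n.succ_pos).ge
  have hge (n : ℕ) : T 1 ≤ T (n + 1) := hmono n.zero_le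
  have htop_succ : Tendsto (fun n => T (n + 1)) atTop atTop :=
    tendsto_atTop_of_add_le hg hg_pos fun n => by
      rw [hTrec (n + 1) n.succ_pos]
      linarith [hgf _ (hge n)]
  have htop : Tendsto T atTop atTop := (tendsto_add_atTop_iff_nat 1).1 htop_succ
  have hsucc : (fun n => T (n + 1)) ~[atTop] T :=
    isEquivalent_succ_of_isLittleO_id htop hf ((eventually_ge_atTop 1).mono hTrec)
  have hsum := isEquivalent_sum_range_sub_mul_rpow hα hT1 hmono htop_succ
    (hsucc.comp_tendsto (tendsto_add_atTop_nat 1))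
  have hpow : (fun n => T (n + 1) ^ (1 + α) / (1 + α)) ~[atTop]
      fun n => T n ^ (1 + α) / (1 + α) :=
    (IsEquivalent.rpow (fun n => (hT1.trans_le (hge n)).le) hsucc.symm).symm.div .refl
  have hden : ∀ᶠ n in atTop, T n ^ (1 + α) / (1 + α) ≠ 0 := by
    filter_upwards [htop.eventually_gt_atTop 0] with n hn
    have : 0 < 1 + α := by linarith
    positivity
  simp only [sum_Icc_one_eq_sum_range]
  exact (isEquivalent_iff_tendsto_one hden).1 (hsum.trans hpow)

/-- With `β ∈ (-1/3,1)`, `α = 2β/(1+β)`, `C > 0`, `𝔰₄ : (0,∞) → [1,∞)`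
with `𝔰₄(T) → ∞` and `𝔰₄(T) = O(log T)`, and the sequence `T₁ = 1`,
`T_{n+1} = T_n + C²·T_n^α·𝔰₄(T_n)`, one has
`∑_{k=1}^n (T_{k+1} - T_k)·T_k^α = (T_n^{1+α}/(1+α))·(1 + o(1))` as `n → ∞`, i.e. the
ratio of the sum to `T_n^{1+α}/(1+α)` tends to `1`. -/
theorem stmt_11 (β C α : ℝ) (hβ : -(1/3 : ℝ) < β) (hβ1 : β < 1)
    (hα : α = 2 * β / (1 + β)) (hC : 0 < C)
    (s4 : ℝ → ℝ) (hs4_ge : ∀ T : ℝ, 0 < T → 1 ≤ s4 T)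
    (hs4_top : Tendsto s4 atTop atTop)
    (hs4_log : ∃ K X : ℝ, ∀ T ≥ X, s4 T ≤ K * Real.log T)
    (T : ℕ → ℝ) (hT1 : T 1 = 1)
    (hTrec : ∀ n : ℕ, 1 ≤ n → T (n + 1) = T n + C ^ 2 * T n ^ α * s4 (T n)) :
    Tendsto (fun n : ℕ =>
        (∑ k ∈ Finset.Icc 1 n, (T (k + 1) - T k) * T k ^ α)
          / (T n ^ (1 + α) / (1 + α))) atTop (𝓝 1) := by
  subst hα
  have hs4_log_isBigO : s4 =O[atTop] Real.log := by
    obtain ⟨K, X, hK⟩ := hs4_log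
    exact isBigO_of_nonneg_of_le_const_mul
      ((eventually_gt_atTop 0).mono fun x hx => zero_le_one.trans (hs4_ge x hx))
      ((eventually_ge_atTop X).mono hK)
  have hstep : (fun x => C ^ 2 * x ^ (2 * β / (1 + β)) * s4 x) =o[atTop] (id : ℝ → ℝ) :=
    const_mul_rpow_mul_isLittleO_id (two_mul_div_one_add_lt_one (by linarith) hβ1) _ hs4_log_isBigO
  have hpos (x : ℝ) (hx : T 1 ≤ x) : 0 < x := by linarith
  have hminorant_pos (x : ℝ) (hx : T 1 ≤ x) : 0 < C ^ 2 * x ^ (2 * β / (1 + β)) := by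
    have := hpos x hx
    positivity
  exact stmt_11_general (neg_one_lt_two_mul_div_one_add hβ) (hpos _ le_rfl)
    (continuousOn_const.mul (continuousOn_id.rpow_const fun x hx => .inl (hpos x hx).ne'))
    hminorant_pos
    (fun x hx => le_mul_of_one_le_right (hminorant_pos x hx).le (hs4_ge x (hpos x hx)))
    hstep hTrec
end

section
/- Fix β ∈ (−1,1) and C > 0. For every function 𝔰₁ : (0,∞) → (0,∞) with lim_{T→∞} 𝔰₁(T) = ∞, there exist functions 𝔰₂ : (0,∞) → (0,∞) and S : (0,∞) → (0,∞) such that: 4·𝔰₂(T) ≤ 𝔰₁(T) for all T > 0; 𝔰₂(T) → ∞ and |S(T) − T| = O(T^{2β/(1+β)}·log T) as T → ∞; and for every function θ : (0,∞) → (0,∞) satisfying θ(T) ~ C·T^{2β/(1+β)} as T → ∞, there exists T₀ > 0 such that for all T > T₀, setting q(T) := θ(T)·𝔰₂(T), the interval inclusion [T, T + q(T)/4] ⊆ [S(T) + q(S(T))/2, S(T) + q(S(T))] holds. (In particular 𝔰₂ and S depend on 𝔰₁, β, C but not otherwise on θ; only T₀ depends on θ.) -/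
open Filter Topology

/-!
With `α = 2β/(1+β) < 1`, the function `q = θ·𝔰₂` is asymptotic to `r(T) = C·T^α·𝔰₂(T)`, which does
not involve `θ`. Shifting back by `5/8` of this scale, `S(T) = T - (5/8)·r(T)`, gives `S(T) ~ T`
provided `𝔰₂ = O(log)`. If moreover `𝔰₂(S(T)) ~ 𝔰₂(T)`, then `q(S(T)) ~ q(T)`, and measured in units
of `q(T)` from `S(T)` the inclusion becomes `[5/8, 7/8] ⊆ [1/2, 1]` in the limit, with room to spare
on both sides. Such an `𝔰₂` is found by passing to the variable `log T`: the largest 1-Lipschitz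
minorant of `x ↦ 𝔰₁(exp x)/4` still tends to infinity, grows at most linearly in `x = log T`, and
changes by a bounded amount when `T` is replaced by `S(T) ~ T`.
-/

open Asymptotics Set

lemma exists_eventuallyEq_forall {ι Y : Type*} {l : Filter ι} {P : ι → Y → Prop} {g : ι → Y}
    (hg : ∀ᶠ x in l, P x (g x)) (hP : ∀ x, ∃ y, P x y) :
    ∃ g' : ι → Y, g' =ᶠ[l] g ∧ ∀ x, P x (g' x) := by
  have hchoice : ∀ x, ∃ y, P x y ∧ (P x (g x) → y = g x) := by
    intro x
    by_cases h : P x (g x)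
    · exact ⟨g x, h, fun _ ↦ rfl⟩
    · exact (hP x).imp fun y hy ↦ ⟨hy, fun h' ↦ absurd h' h⟩
  choose g' hg' hg'_eq using hchoice
  exact ⟨g', hg.mono hg'_eq, hg'⟩

lemma exists_forall_ge_abs_le_of_isBigO {ι : Type*} [Preorder ι] [IsDirectedOrder ι] [Nonempty ι]
    {f g : ι → ℝ} (hfg : f =O[atTop] g) (hg : ∀ᶠ x in atTop, 0 ≤ g x) :
    ∃ (K : ℝ) (X : ι), ∀ x ≥ X, |f x| ≤ K * g x := by
  obtain ⟨K, hK⟩ := hfg.bound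
  obtain ⟨X, hX⟩ := eventually_atTop.1 (hK.and hg)
  refine ⟨K, X, fun x hx ↦ ?_⟩
  simpa only [Real.norm_eq_abs, abs_of_nonneg (hX x hx).2] using (hX x hx).1

lemma isBigO_id_of_lipschitzWith {E F : Type*} [NormedAddCommGroup E] [NormedAddCommGroup F]
    {G : E → F} {K : NNReal} {l : Filter E} (hG : LipschitzWith K G)
    (hl : Tendsto (‖·‖) l atTop) : G =O[l] (id : E → E) := by
  have hconst : (fun _ ↦ G 0) =o[l] (id : E → E) := isLittleO_const_left.2 (.inr hl)
  have hsub : (fun x ↦ G x - G 0) =O[l] (id : E → E) :=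
    .of_bound K (.of_forall fun x ↦ by simpa using hG.norm_sub_le x 0)
  simpa only [sub_add_cancel] using hsub.add hconst.isBigO

section LipschitzEnvelope

variable {X : Type*} [PseudoMetricSpace X] {f : X → ℝ}

/-- The Pasch–Hausdorff envelope of `f`: for `f` bounded below, its largest `1`-Lipschitz minorant.
It regularises `f` without destroying divergence to infinity. Where the
infimum is `-∞` it takes the junk value `0`. -/
noncomputable def lipschitzEnvelope (f : X → ℝ) (x : X) : ℝ :=
  ⨅ u, (f u + dist u x)

lemma bddBelow_range_add_dist (hf : BddBelow (range f)) (x : X) :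
    BddBelow (range fun u ↦ f u + dist u x) := by
  obtain ⟨m, hm⟩ := hf
  refine ⟨m, forall_mem_range.2 fun u ↦ ?_⟩
  have := hm (mem_range_self u)
  linarith [dist_nonneg (x := u) (y := x)]

lemma lipschitzEnvelope_le (hf : BddBelow (range f)) (x : X) : lipschitzEnvelope f x ≤ f x :=
  (ciInf_le (bddBelow_range_add_dist hf x) x).trans_eq (by rw [dist_self, add_zero])

lemma lipschitzWith_lipschitzEnvelope (hf : BddBelow (range f)) :
    LipschitzWith 1 (lipschitzEnvelope f) := by
  refine LipschitzWith.of_le_add fun x y ↦ ?_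
  have : Nonempty X := ⟨x⟩
  rw [← sub_le_iff_le_add]
  refine le_ciInf fun u ↦ ?_
  calc lipschitzEnvelope f x - dist x y
    _ ≤ f u + dist u x - dist x y := by
      gcongr
      exact ciInf_le (bddBelow_range_add_dist hf x) u
    _ ≤ f u + dist u y := by linarith [dist_triangle_right u x y]

lemma tendsto_lipschitzEnvelope_atTop {f : ℝ → ℝ} (hf : BddBelow (range f))
    (hf_top : Tendsto f atTop atTop) : Tendsto (lipschitzEnvelope f) atTop atTop := by
  obtain ⟨m, hm⟩ := hf
  refine tendsto_atTop.2 fun M ↦ ?_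
  obtain ⟨A, hA⟩ := eventually_atTop.1 (hf_top.eventually_ge_atTop M)
  filter_upwards [eventually_ge_atTop (A + M - m)] with x hx
  refine le_ciInf fun u ↦ ?_
  rcases le_total A u with hAu | huA
  · linarith [hA u hAu, dist_nonneg (x := u) (y := x)]
  · have hfu : m ≤ f u := hm (mem_range_self u)
    have hdist : x - u ≤ dist u x := by
      rw [dist_comm]
      exact le_abs_self _
    linarith

end LipschitzEnvelope

/-- Pseudo-regular variation in the sense of Buldygin, Klesov and Steinebach: `f` preserves
asymptotic equivalence of its argument with the identity. This is the regularity needed for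
`f (S T)` and `f T` to be interchangeable when `S T ~ T`. -/
def IsPseudoRegularlyVarying (f : ℝ → ℝ) : Prop :=
  ∀ S : ℝ → ℝ, S ~[atTop] id → f ∘ S ~[atTop] f

namespace IsPseudoRegularlyVarying

variable {f g : ℝ → ℝ}

lemma rpow (a : ℝ) : IsPseudoRegularlyVarying fun T ↦ T ^ a := by
  intro S hS
  have habs : (id : ℝ → ℝ) =ᶠ[atTop] fun T ↦ |T| := by
    filter_upwards [eventually_ge_atTop 0] with T hT using (abs_of_nonneg hT).symm
  refine (IsEquivalent.rpow (fun T ↦ abs_nonneg T) (hS.congr_right habs)).congr_right ?_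
  filter_upwards [habs] with T hT using congrArg (· ^ a) hT.symm

lemma const_mul (hf : IsPseudoRegularlyVarying f) (C : ℝ) :
    IsPseudoRegularlyVarying fun T ↦ C * f T :=
  fun S hS ↦ IsEquivalent.refl.mul (hf S hS)

lemma mul (hf : IsPseudoRegularlyVarying f) (hg : IsPseudoRegularlyVarying g) :
    IsPseudoRegularlyVarying (f * g) :=
  fun S hS ↦ (hf S hS).mul (hg S hS)

lemma congr (hf : IsPseudoRegularlyVarying f) (hgf : g ~[atTop] f) :
    IsPseudoRegularlyVarying g := fun S hS ↦
  have hS_top : Tendsto S atTop atTop := hS.symm.tendsto_atTop tendsto_id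
  ((hgf.comp_tendsto hS_top).trans (hf S hS)).trans hgf.symm

lemma comp_log {G : ℝ → ℝ} {K : NNReal} (hG : LipschitzWith K G)
    (hG_top : Tendsto G atTop atTop) : IsPseudoRegularlyVarying (G ∘ Real.log) := by
  intro S hS
  have hS_top : Tendsto S atTop atTop := hS.symm.tendsto_atTop tendsto_id
  have hratio : Tendsto (S / id) atTop (𝓝 1) :=
    (isEquivalent_iff_tendsto_one (eventually_ne_atTop 0)).1 hS
  have hlog : Tendsto (fun T ↦ Real.log (S T) - Real.log T) atTop (𝓝 (Real.log 1)) := by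
    refine (hratio.log one_ne_zero).congr' ?_
    filter_upwards [hS_top.eventually_ne_atTop 0, eventually_ne_atTop 0] with T hST hT
    exact Real.log_div hST hT
  calc (fun T ↦ G (Real.log (S T)) - G (Real.log T))
    _ =O[atTop] fun T ↦ Real.log (S T) - Real.log T :=
      .of_bound K (.of_forall fun T ↦ hG.norm_sub_le _ _)
    _ =O[atTop] fun _ ↦ (1 : ℝ) := hlog.isBigO_one ℝ
    _ =o[atTop] (G ∘ Real.log) :=
      (isLittleO_one_left_iff ℝ).2 <|
        tendsto_norm_atTop_atTop.comp <| hG_top.comp Real.tendsto_log_atTop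

end IsPseudoRegularlyVarying

lemma exists_isPseudoRegularlyVarying_minorant {f : ℝ → ℝ} (hf : ∀ T, 0 < T → 0 < f T)
    (hf_top : Tendsto f atTop atTop) :
    ∃ s : ℝ → ℝ, (∀ T, 0 < T → 0 < s T ∧ s T ≤ f T) ∧ Tendsto s atTop atTop ∧
      s =O[atTop] Real.log ∧ IsPseudoRegularlyVarying s := by
  set G := lipschitzEnvelope (f ∘ Real.exp)
  have hbdd : BddBelow (range (f ∘ Real.exp)) :=
    ⟨0, forall_mem_range.2 fun x ↦ (hf _ (Real.exp_pos x)).le⟩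
  have hG_lip : LipschitzWith 1 G := lipschitzWith_lipschitzEnvelope hbdd
  have hG_top : Tendsto G atTop atTop :=
    tendsto_lipschitzEnvelope_atTop hbdd (hf_top.comp Real.tendsto_exp_atTop)
  have hGlog_top : Tendsto (G ∘ Real.log) atTop atTop := hG_top.comp Real.tendsto_log_atTop
  have hGlog_le : ∀ T, 0 < T → G (Real.log T) ≤ f T := fun T hT ↦ by
    simpa only [Function.comp_apply, Real.exp_log hT] using lipschitzEnvelope_le hbdd (Real.log T)
  obtain ⟨s, hsG, hs⟩ := exists_eventuallyEq_forall
    (P := fun T y ↦ 0 < T → 0 < y ∧ y ≤ f T) (g := G ∘ Real.log)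
    ((hGlog_top.eventually_gt_atTop 0).mono fun T hpos hT ↦ ⟨hpos, hGlog_le T hT⟩)
    (fun T ↦ ⟨f T, fun hT ↦ ⟨hf T hT, le_rfl⟩⟩)
  refine ⟨s, hs, hGlog_top.congr' hsG.symm, ?_, ?_⟩
  · have hG_linear : G =O[atTop] id := isBigO_id_of_lipschitzWith hG_lip tendsto_norm_atTop_atTop
    exact hsG.trans_isBigO (hG_linear.comp_tendsto Real.tendsto_log_atTop)
  · exact (IsPseudoRegularlyVarying.comp_log hG_lip hG_top).congr hsG.isEquivalent

section Windows

variable {q r S : ℝ → ℝ} {a b c d : ℝ}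

lemma eventually_Icc_subset_Icc_of_tendsto {l : Filter ℝ} (hq : ∀ᶠ T in l, 0 < q T)
    (hqS : q ∘ S ~[l] q) (hS : Tendsto (fun T ↦ (T - S T) / q T) l (𝓝 c))
    (hac : a < c) (hcbd : c + b < d) :
    ∀ᶠ T in l, Icc T (T + b * q T) ⊆ Icc (S T + a * q (S T)) (S T + d * q (S T)) := by
  have hratio : Tendsto (fun T ↦ q (S T) / q T) l (𝓝 1) :=
    (isEquivalent_iff_tendsto_one (hq.mono fun _ ↦ ne_of_gt)).1 hqS
  have hlower : ∀ᶠ T in l, a * (q (S T) / q T) < (T - S T) / q T :=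
    (hratio.const_mul a).eventually_lt hS (by rwa [mul_one])
  have hupper : ∀ᶠ T in l, (T - S T) / q T + b < d * (q (S T) / q T) :=
    (hS.add_const b).eventually_lt (hratio.const_mul d) (by rwa [mul_one])
  filter_upwards [hq, hlower, hupper] with T hqT hlowerT hupperT
  rw [← mul_div_assoc, div_lt_div_iff_of_pos_right hqT] at hlowerT
  rw [← mul_div_assoc, div_add' _ _ _ hqT.ne', div_lt_div_iff_of_pos_right hqT] at hupperT
  exact Icc_subset_Icc (by linarith) (by linarith)

lemma isEquivalent_id_of_eventuallyEq_sub (hr : r =o[atTop] id)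
    (hS : S =ᶠ[atTop] fun T ↦ T - c * r T) : S ~[atTop] id :=
  hS.trans_isEquivalent (IsEquivalent.refl.sub_isLittleO (hr.const_mul_left c))

lemma exists_pos_eventuallyEq_sub (hr : r =o[atTop] id) (c : ℝ) :
    ∃ S : ℝ → ℝ, (∀ T, 0 < T → 0 < S T) ∧ S =ᶠ[atTop] fun T ↦ T - c * r T := by
  have hpos : ∀ᶠ T in atTop, 0 < T - c * r T :=
    (isEquivalent_id_of_eventuallyEq_sub hr .rfl).eventually_pos (eventually_gt_atTop 0)
  obtain ⟨S, hS, hS_pos⟩ := exists_eventuallyEq_forall (P := fun T y ↦ 0 < T → 0 < y)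
    (hpos.mono fun _ h _ ↦ h) (fun T ↦ ⟨T, id⟩)
  exact ⟨S, hS_pos, hS⟩

lemma sub_id_isBigO_of_eventuallyEq_sub (hS : S =ᶠ[atTop] fun T ↦ T - c * r T) :
    (fun T ↦ S T - T) =O[atTop] r := by
  refine (isBigO_const_mul_self (-c) r atTop).congr' ?_ .rfl
  filter_upwards [hS] with T hST
  rw [hST]
  ring

lemma IsPseudoRegularlyVarying.eventually_Icc_subset_Icc (hr : IsPseudoRegularlyVarying r)
    (hr_pos : ∀ᶠ T in atTop, 0 < r T) (hr_small : r =o[atTop] id) (hqr : q ~[atTop] r)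
    (hS : S =ᶠ[atTop] fun T ↦ T - c * r T) (hac : a < c) (hcbd : c + b < d) :
    ∀ᶠ T in atTop, Icc T (T + b * q T) ⊆ Icc (S T + a * q (S T)) (S T + d * q (S T)) := by
  have hS_id : S ~[atTop] id := isEquivalent_id_of_eventuallyEq_sub hr_small hS
  have hq_pos : ∀ᶠ T in atTop, 0 < q T := hqr.eventually_pos hr_pos
  have hrq : Tendsto (r / q) atTop (𝓝 1) :=
    (isEquivalent_iff_tendsto_one (hq_pos.mono fun _ ↦ ne_of_gt)).1 hqr.symm
  have hshift : Tendsto (fun T ↦ (T - S T) / q T) atTop (𝓝 c) := by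
    rw [← mul_one c]
    refine (hrq.const_mul c).congr' ?_
    filter_upwards [hS] with T hST
    rw [hST, sub_sub_cancel, Pi.div_apply, mul_div_assoc]
  exact eventually_Icc_subset_Icc_of_tendsto hq_pos (hr.congr hqr S hS_id) hshift hac hcbd

lemma IsPseudoRegularlyVarying.exists_shift_Icc_subset_Icc (hr : IsPseudoRegularlyVarying r)
    (hr_pos : ∀ᶠ T in atTop, 0 < r T) (hr_small : r =o[atTop] id) (habd : a + b < d) :
    ∃ S : ℝ → ℝ, (∀ T, 0 < T → 0 < S T) ∧ ((fun T ↦ S T - T) =O[atTop] r) ∧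
      ∀ q : ℝ → ℝ, q ~[atTop] r → ∀ᶠ T in atTop,
        Icc T (T + b * q T) ⊆ Icc (S T + a * q (S T)) (S T + d * q (S T)) := by
  obtain ⟨S, hS_pos, hS⟩ := exists_pos_eventuallyEq_sub hr_small ((a + (d - b)) / 2)
  refine ⟨S, hS_pos, sub_id_isBigO_of_eventuallyEq_sub hS, fun q hqr ↦ ?_⟩
  exact hr.eventually_Icc_subset_Icc hr_pos hr_small hqr hS (by linarith) (by linarith)

end Windows

lemma rpow_mul_log_isLittleO_id {a : ℝ} (ha : a < 1) :
    (fun T : ℝ ↦ T ^ a * Real.log T) =o[atTop] id := by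
  have hlog : Real.log =o[atTop] fun T ↦ T ^ (1 - a) := isLittleO_log_rpow_atTop (sub_pos.2 ha)
  refine ((isBigO_refl (fun T : ℝ ↦ T ^ a) atTop).mul_isLittleO hlog).congr' .rfl ?_
  filter_upwards [eventually_gt_atTop 0] with T hT
  rw [← Real.rpow_add hT, add_sub_cancel, Real.rpow_one, id]

lemma isEquivalent_const_mul_of_tendsto_div {ι : Type*} {l : Filter ι} {f g : ι → ℝ} {C : ℝ}
    (hC : C ≠ 0) (hfg : Tendsto (fun x ↦ f x / g x) l (𝓝 C)) :
    f ~[l] fun x ↦ C * g x := by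
  refine isEquivalent_of_tendsto_one ?_
  simpa [hC, Pi.div_def, div_mul_eq_div_div_swap] using hfg.div_const C

/-- (Coupling windows.) Given `β ∈ (-1,1)`, `C > 0` and
`𝔰₁ : (0,∞) → (0,∞)` with `𝔰₁(T) → ∞`, there exist `𝔰₂, S : (0,∞) → (0,∞)` with
`4·𝔰₂ ≤ 𝔰₁`, `𝔰₂(T) → ∞`, `|S(T) - T| = O(T^{2β/(1+β)}·log T)`, such that for every
`θ : (0,∞) → (0,∞)` with `θ(T) ~ C·T^{2β/(1+β)}` there is `T₀ > 0` such that for all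
`T > T₀`, with `q := θ·𝔰₂`, `[T, T + q(T)/4] ⊆ [S(T) + q(S(T))/2, S(T) + q(S(T))]`. -/
theorem stmt_13 (β C : ℝ) (hβ : -1 < β) (hβ1 : β < 1) (hC : 0 < C)
    (s1 : ℝ → ℝ) (hs1pos : ∀ T : ℝ, 0 < T → 0 < s1 T)
    (hs1 : Tendsto s1 atTop atTop) :
    ∃ s2 S : ℝ → ℝ,
      (∀ T : ℝ, 0 < T → 0 < s2 T ∧ 0 < S T) ∧
      (∀ T : ℝ, 0 < T → 4 * s2 T ≤ s1 T) ∧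
      Tendsto s2 atTop atTop ∧
      (∃ K X : ℝ, ∀ T ≥ X, |S T - T| ≤ K * (T ^ (2 * β / (1 + β)) * Real.log T)) ∧
      (∀ θ : ℝ → ℝ, (∀ T : ℝ, 0 < T → 0 < θ T) →
        Tendsto (fun T : ℝ => θ T / T ^ (2 * β / (1 + β))) atTop (𝓝 C) →
        ∃ T₀ : ℝ, 0 < T₀ ∧ ∀ T > T₀,
          Set.Icc T (T + θ T * s2 T / 4) ⊆
            Set.Icc (S T + θ (S T) * s2 (S T) / 2) (S T + θ (S T) * s2 (S T))) := by
  set α := 2 * β / (1 + β)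
  have hα : α < 1 := (div_lt_one (by linarith)).2 (by linarith)
  obtain ⟨s, hs, hs_top, hs_log, hs_prv⟩ := exists_isPseudoRegularlyVarying_minorant
    (fun T hT ↦ div_pos (hs1pos T hT) four_pos) (hs1.atTop_div_const four_pos)
  set r : ℝ → ℝ := (fun T ↦ C * T ^ α) * s
  have hr_prv : IsPseudoRegularlyVarying r :=
    ((IsPseudoRegularlyVarying.rpow α).const_mul C).mul hs_prv
  have hr_pos : ∀ᶠ T in atTop, 0 < r T := by
    filter_upwards [eventually_gt_atTop 0] with T hT
    exact mul_pos (mul_pos hC (Real.rpow_pos_of_pos hT α)) (hs T hT).1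
  have hr_log : r =O[atTop] fun T ↦ T ^ α * Real.log T :=
    (isBigO_const_mul_self C _ _).mul hs_log
  have hr_small : r =o[atTop] id := hr_log.trans_isLittleO (rpow_mul_log_isLittleO_id hα)
  obtain ⟨S, hS_pos, hS_near, hS_window⟩ := hr_prv.exists_shift_Icc_subset_Icc
    (a := 1 / 2) (b := 1 / 4) (d := 1) hr_pos hr_small (by norm_num)
  refine ⟨s, S, fun T hT ↦ ⟨(hs T hT).1, hS_pos T hT⟩,
    fun T hT ↦ by linarith [(hs T hT).2], hs_top, ?_, fun θ _ hθ ↦ ?_⟩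
  · refine exists_forall_ge_abs_le_of_isBigO (hS_near.trans hr_log) ?_
    filter_upwards [eventually_ge_atTop 1] with T hT
    exact mul_nonneg (by positivity) (Real.log_nonneg hT)
  · have hqr : θ * s ~[atTop] r := (isEquivalent_const_mul_of_tendsto_div hC.ne' hθ).mul .refl
    obtain ⟨T₀, hT₀, hsubset⟩ := (atTop_basis_Ioi' 0).eventually_iff.1 (hS_window _ hqr)
    exact ⟨T₀, hT₀, fun T hT ↦ by simpa [div_eq_inv_mul] using hsubset hT⟩
end

section
/- Let (E, 𝓔) be a measurable space and (P_t)_{t≥0} a family of Markov (probability) kernels on E which forms a semigroup in the sense that (ν P_s) P_t = ν P_{s+t} for all probability measures ν on E and all s, t ≥ 0, and ν P_0 = ν, where ν P_t(A) := ∫_E P_t(x, A) dν(x). Suppose that for every t > 0 there exist a probability measure μ_t on E and a constant λ_t ∈ (0,1) such that μ_t P_{nt} = μ_t for all n ∈ ℕ and d_TV(ν P_{nt}, μ_t) ≤ 2·λ_t^n for every probability measure ν on E and every n ∈ ℕ. Then: all the measures μ_t (t > 0) coincide, equal to a single probability measure μ; μ P_t = μ for all t ≥ 0; and, with C₀ :=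 2/λ₁, d_TV(ν P_t, μ) ≤ C₀·λ₁^t for every probability measure ν on E and every t ≥ 0. -/
open Filter Topology MeasureTheory

/-!
The bound at the times `n h` of a single skeleton `P_h` passes to every `t ≥ 0`: write
`t = (t - ⌊t / h⌋ h) + ⌊t / h⌋ h` and apply it to the initial law `ν P_{t - ⌊t / h⌋ h}`. The bound
tends to `0` as `t → ∞`, so no `P_t` with `t > 0` has an invariant probability measure other
than `μ`. Since `P_t` and `P_h` commute, `μ P_t` is `P_h`-invariant, hence `μ P_t = μ`.
-/

section

open ProbabilityTheory
open scoped NNReal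

variable {E M : Type*} [MeasurableSpace E]

/-- A one-parameter semigroup of kernels, i.e. the Chapman–Kolmogorov equations, with time in an
additive monoid. In `add`, the kernel `κ s` acts first. -/
structure IsKernelSemigroup [AddMonoid M] (κ : M → Kernel E E) : Prop where
  zero : κ 0 = Kernel.id
  add : ∀ s t, κ (s + t) = κ t ∘ₖ κ s

lemma pow_natFloor_le_rpow_div {r : ℝ} (hr₀ : 0 < r) (hr₁ : r ≤ 1) (x : ℝ) :
    r ^ ⌊x⌋₊ ≤ r ^ x / r := by
  rw [← Real.rpow_natCast, ← Real.rpow_sub_one hr₀.ne']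
  exact Real.rpow_le_rpow_of_exponent_ge hr₀ hr₁ (Nat.sub_one_lt_floor x).le

lemma invariant_comp_of_comm {κ η : Kernel E E} {μ : Measure E} (hcomm : κ ∘ₖ η = η ∘ₖ κ)
    (hμ : κ.Invariant μ) : κ.Invariant (η ∘ₘ μ) := by
  rw [Kernel.Invariant, Measure.comp_assoc, hcomm, ← Measure.comp_assoc, hμ.def]

namespace IsKernelSemigroup

lemma of_forall_comp_isProbabilityMeasure [AddMonoid M] {κ : M → Kernel E E}
    (hzero : ∀ (ν : Measure E) [IsProbabilityMeasure ν], κ 0 ∘ₘ ν = ν)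
    (hadd : ∀ (ν : Measure E) [IsProbabilityMeasure ν] (s t : M),
      κ t ∘ₘ (κ s ∘ₘ ν) = κ (s + t) ∘ₘ ν) :
    IsKernelSemigroup κ where
  zero := by
    ext1 x
    simpa only [Measure.dirac_bind (Kernel.measurable _), Kernel.id_apply]
      using hzero (Measure.dirac x)
  add s t := by
    ext1 x
    simpa only [Measure.dirac_bind (Kernel.measurable _), Kernel.comp_apply]
      using (hadd (Measure.dirac x) s t).symm

lemma comp_comp [AddMonoid M] {κ : M → Kernel E E} (hκ : IsKernelSemigroup κ) (s t : M)
    (ν : Measure E) : κ t ∘ₘ (κ s ∘ₘ ν) = κ (s + t) ∘ₘ ν := by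
  rw [Measure.comp_assoc, hκ.add]

lemma comp_comm [AddCommMonoid M] {κ : M → Kernel E E} (hκ : IsKernelSemigroup κ) (s t : M) :
    κ s ∘ₖ κ t = κ t ∘ₖ κ s := by
  rw [← hκ.add, ← hκ.add, add_comm]

section

variable [AddMonoid M] {κ : M → Kernel E E} {t : M} {μ ν : Measure E}

lemma invariant_nsmul (hκ : IsKernelSemigroup κ) (hν : (κ t).Invariant ν) (n : ℕ) :
    (κ (n • t)).Invariant ν := by
  induction n with
  | zero => rw [zero_nsmul, hκ.zero, Kernel.Invariant, Measure.id_comp]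
  | succ n ih =>
    rw [succ_nsmul, hκ.add]
    exact hν.comp ih

lemma eq_of_invariant_of_abs_sub_le [IsFiniteMeasure μ] [IsFiniteMeasure ν]
    (hκ : IsKernelSemigroup κ) (hν : (κ t).Invariant ν) {b : ℕ → ℝ}
    (hb : Tendsto b atTop (𝓝 0))
    (hle : ∀ (n : ℕ) (A : Set E), MeasurableSet A →
      |(κ (n • t) ∘ₘ ν).real A - μ.real A| ≤ b n) :
    ν = μ := by
  ext A hA
  have hdist : |ν.real A - μ.real A| ≤ 0 := ge_of_tendsto' hb fun n ↦ by
    simpa only [(hκ.invariant_nsmul hν n).def] using hle n A hA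
  exact (measureReal_eq_measureReal_iff).mp (sub_eq_zero.mp (abs_nonpos_iff.mp hdist))

end

lemma abs_sub_le_rpow_of_skeleton {κ : ℝ≥0 → Kernel E E} [∀ t, IsMarkovKernel (κ t)]
    (hκ : IsKernelSemigroup κ) {h : ℝ≥0} (hh : 0 < h) {C r a : ℝ} (hr₀ : 0 < r) (hr₁ : r ≤ 1)
    {A : Set E}
    (hskel : ∀ (ν : Measure E) [IsProbabilityMeasure ν] (n : ℕ),
      |(κ (n • h) ∘ₘ ν).real A - a| ≤ C * r ^ n)
    (ν : Measure E) [IsProbabilityMeasure ν] (t : ℝ≥0) :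
    |(κ t ∘ₘ ν).real A - a| ≤ C / r * r ^ (t / h : ℝ) := by
  set n := ⌊(t / h : ℝ)⌋₊
  have hn : n • h ≤ t := by
    rw [nsmul_eq_mul, ← le_div_iff₀ hh, ← NNReal.coe_le_coe]
    exact_mod_cast Nat.floor_le (by positivity : (0 : ℝ) ≤ t / h)
  have hC : 0 ≤ C := by simpa using (abs_nonneg _).trans (hskel ν 0)
  calc |(κ t ∘ₘ ν).real A - a|
      = |(κ (n • h) ∘ₘ (κ (t - n • h) ∘ₘ ν)).real A - a| := by
        rw [hκ.comp_comp, tsub_add_cancel_of_le hn]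
    _ ≤ C * r ^ n := hskel _ n
    _ ≤ C * (r ^ (t / h : ℝ) / r) := by gcongr; exact pow_natFloor_le_rpow_div hr₀ hr₁ _
    _ = C / r * r ^ (t / h : ℝ) := by ring

end IsKernelSemigroup

theorem stmt_15_general {κ : ℝ≥0 → Kernel E E} [∀ t, IsMarkovKernel (κ t)]
    (hκ : IsKernelSemigroup κ) {h : ℝ≥0} (hh : 0 < h) {μ : Measure E} [IsProbabilityMeasure μ]
    (hμ : (κ h).Invariant μ) {C r : ℝ} (hr : r ∈ Set.Ioo 0 1)
    (hskel : ∀ (ν : Measure E) [IsProbabilityMeasure ν] (n : ℕ) (A : Set E), MeasurableSet A →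
      |(κ (n • h) ∘ₘ ν).real A - μ.real A| ≤ C * r ^ n) :
    (∀ t, 0 < t → ∀ (ν : Measure E) [IsProbabilityMeasure ν], (κ t).Invariant ν → ν = μ) ∧
    (∀ t, (κ t).Invariant μ) ∧
    (∀ (ν : Measure E) [IsProbabilityMeasure ν] (t : ℝ≥0) (A : Set E), MeasurableSet A →
      |(κ t ∘ₘ ν).real A - μ.real A| ≤ C / r * r ^ (t / h : ℝ)) := by
  have hrate (ν : Measure E) [IsProbabilityMeasure ν] (t : ℝ≥0) (A : Set E)
      (hA : MeasurableSet A) : |(κ t ∘ₘ ν).real A - μ.real A| ≤ C / r * r ^ (t / h : ℝ) :=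
    hκ.abs_sub_le_rpow_of_skeleton hh hr.1 hr.2.le (fun ν _ n ↦ hskel ν n A hA) ν t
  have hunique (t : ℝ≥0) (ht : 0 < t) (ν : Measure E) [IsProbabilityMeasure ν]
      (hν : (κ t).Invariant ν) : ν = μ := by
    have hlim : Tendsto (fun n : ℕ ↦ C / r * r ^ ((n • t : ℝ≥0) / h : ℝ)) atTop (𝓝 0) := by
      have hq : r ^ (t / h : ℝ) < 1 := Real.rpow_lt_one hr.1.le hr.2 (by positivity)
      simpa [mul_div_assoc, mul_comm (_ : ℝ) (t / h : ℝ), Real.rpow_mul_natCast hr.1.le] using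
        (tendsto_pow_atTop_nhds_zero_of_lt_one (Real.rpow_nonneg hr.1.le _) hq).const_mul (C / r)
    exact hκ.eq_of_invariant_of_abs_sub_le hν hlim fun n ↦ hrate ν (n • t)
  exact ⟨hunique,
    fun t ↦ hunique h hh _ (invariant_comp_of_comm (hκ.comp_comm h t) hμ), hrate⟩

end

/-- Let `(P_t)_{t ≥ 0}` be a semigroup of Markov kernels on a measurable
space `E` (acting on probability measures by `ν P_t = ν.bind (κ t)`). Suppose for every
`t > 0` there are a probability measure `μ_t` with `μ_t P_{nt} = μ_t` for all `n ∈ ℕ` and a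
constant `λ_t ∈ (0,1)` with `d_TV(ν P_{nt}, μ_t) ≤ 2 λ_t^n` for all probability measures
`ν` and all `n`. Then all the `μ_t` coincide, the common measure `μ = μ₁` is invariant
(`μ P_t = μ` for all `t ≥ 0`), and with `C₀ := 2/λ₁` one has
`d_TV(ν P_t, μ) ≤ C₀·λ₁^t` for all probability measures `ν` and all `t ≥ 0`.
(The total variation distance bound is expressed by bounding `|ν P_t (A) - μ (A)|`
over all measurable sets `A`.) -/
theorem stmt_15 {E : Type*} [MeasurableSpace E]
    (κ : ℝ → ProbabilityTheory.Kernel E E)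
    (hκ : ∀ t : ℝ, ProbabilityTheory.IsMarkovKernel (κ t))
    (hsemi : ∀ ν : Measure E, IsProbabilityMeasure ν → ∀ s t : ℝ, 0 ≤ s → 0 ≤ t →
      (ν.bind ⇑(κ s)).bind ⇑(κ t) = ν.bind ⇑(κ (s + t)))
    (hid : ∀ ν : Measure E, IsProbabilityMeasure ν → ν.bind ⇑(κ 0) = ν)
    (μt : ℝ → Measure E) (lam : ℝ → ℝ)
    (hμt : ∀ t : ℝ, 0 < t → IsProbabilityMeasure (μt t))
    (hlam : ∀ t : ℝ, 0 < t → lam t ∈ Set.Ioo (0:ℝ) 1)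
    (hinv : ∀ t : ℝ, 0 < t → ∀ n : ℕ, (μt t).bind ⇑(κ (n * t)) = μt t)
    (hTV : ∀ t : ℝ, 0 < t → ∀ ν : Measure E, IsProbabilityMeasure ν → ∀ n : ℕ,
      ∀ A : Set E, MeasurableSet A →
        |(ν.bind ⇑(κ (n * t)) A).toReal - (μt t A).toReal| ≤ 2 * lam t ^ n) :
    (∀ s : ℝ, 0 < s → ∀ t : ℝ, 0 < t → μt s = μt t) ∧
    (∀ t : ℝ, 0 ≤ t → (μt 1).bind ⇑(κ t) = μt 1) ∧
    (∀ ν : Measure E, IsProbabilityMeasure ν → ∀ t : ℝ, 0 ≤ t →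
      ∀ A : Set E, MeasurableSet A →
        |(ν.bind ⇑(κ t) A).toReal - (μt 1 A).toReal| ≤ (2 / lam 1) * lam 1 ^ t) := by
  have hsemigroup : IsKernelSemigroup fun t : NNReal ↦ κ t :=
    .of_forall_comp_isProbabilityMeasure (fun ν _ ↦ hid ν ‹_›)
      (fun ν _ s t ↦ hsemi ν ‹_› s t s.2 t.2)
  have hinvariant (t : ℝ) (ht : 0 < t) : (κ t).Invariant (μt t) := by
    simpa [ProbabilityTheory.Kernel.Invariant] using hinv t ht 1
  have := hμt 1 one_pos
  obtain ⟨hunique, hμ, hrate⟩ := stmt_15_general hsemigroup one_pos (hinvariant 1 one_pos)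
    (hlam 1 one_pos) (fun ν _ n A hA ↦ by
      simpa [measureReal_def] using hTV 1 one_pos ν ‹_› n A hA)
  have heq (t : ℝ) (ht : 0 < t) : μt t = μt 1 :=
    have := hμt t ht
    hunique ⟨t, ht.le⟩ ht (μt t) (hinvariant t ht)
  exact ⟨fun s hs t ht ↦ (heq s hs).trans (heq t ht).symm, fun t ht ↦ hμ ⟨t, ht⟩,
    fun ν _ t ht A hA ↦ by
      lift t to NNReal using ht
      simpa [measureReal_def] using hrate ν t A hA⟩
end
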